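/- arXiv:1810.12845 — 8 statements merged into one kernel-verified Lean document; each statement's English description precedes it below -/
import Mathlib

section
/- Let V be a finite-dimensional real normed vector space and let A ⊆ V be additive (for all x, y ∈ A, x + y ∈ A) and approximately diluable (for every ε > 0 there exists δ > 0 such that for every x ∈ A and every real λ with 0 ≤ λ ≤ δ there exists y ∈ A with ‖λ • x − y‖ < ε). Then the topological closure of A is a convex cone: closure(A) is a convex set, and t • z ∈ closure(A) for every z ∈ closure(A) and every real t > 0. -/
/-!
To reach `t • x` for `x ∈ A` and a possibly large `t ≥ 0`, first climb inside `A` to a multiple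
`n • x`, with `n` so large that `t / n` is an admissible dilution factor; diluting `n • x` by
`t / n` then approximates `t • x` by points of `A`. Hence `closure A` is stable under addition and
under scaling by nonnegative scalars.
-/

open Topology

theorem nsmul_mem_of_ne_zero {M S : Type*} [AddMonoid M] [SetLike S M] [AddMemClass S M] {s : S}
    {x : M} (hx : x ∈ s) {n : ℕ} (hn : n ≠ 0) : n • x ∈ s := by
  induction n, Nat.one_le_iff_ne_zero.mpr hn using Nat.le_induction with
  | base => rwa [one_nsmul]
  | succ k hk ih => exact succ_nsmul x k ▸ add_mem (ih (Nat.one_le_iff_ne_zero.mp hk)) hx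

/-- A set `A` is approximately diluable if, up to an arbitrarily small error, all its points can be
scaled inside `A` by all sufficiently small nonnegative factors. The error is measured by
neighbourhoods of `0`, and the bound `δ` on the factors is uniform over the points of `A`. -/
def IsApproxDiluable (𝕜 : Type*) {V : Type*} [Zero 𝕜] [Preorder 𝕜] [AddGroup V] [SMul 𝕜 V]
    [TopologicalSpace V] (A : Set V) : Prop :=
  ∀ U ∈ 𝓝 (0 : V), ∃ δ : 𝕜, 0 < δ ∧ ∀ x ∈ A, ∀ l : 𝕜, 0 ≤ l → l ≤ δ → ∃ y ∈ A, y - l • x ∈ U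

theorem isApproxDiluable_iff_norm {𝕜 V : Type*} [Zero 𝕜] [Preorder 𝕜] [SeminormedAddGroup V]
    [SMul 𝕜 V] {A : Set V} :
    IsApproxDiluable 𝕜 A ↔ ∀ ε : ℝ, 0 < ε → ∃ δ : 𝕜, 0 < δ ∧
      ∀ x ∈ A, ∀ l : 𝕜, 0 ≤ l → l ≤ δ → ∃ y ∈ A, ‖l • x - y‖ < ε := by
  simp only [norm_sub_rev (_ • _)]
  refine NormedAddGroup.nhds_zero_basis_norm_lt.forall_iff fun U W hUW ⟨δ, hδ, hU⟩ ↦ ?_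
  refine ⟨δ, hδ, fun x hx l hl hlδ ↦ ?_⟩
  obtain ⟨y, hy, hyU⟩ := hU x hx l hl hlδ
  exact ⟨y, hy, hUW hyU⟩

section Closure

variable {𝕜 V : Type*} [Semifield 𝕜] [LinearOrder 𝕜] [IsStrictOrderedRing 𝕜] [Archimedean 𝕜]
  [AddCommGroup V] [Module 𝕜 V] [TopologicalSpace V] [IsTopologicalAddGroup V]
  {A : AddSubsemigroup V}

theorem IsApproxDiluable.smul_mem_closure_of_mem (hA : IsApproxDiluable 𝕜 (A : Set V)) {t : 𝕜}
    (ht : 0 ≤ t) {x : V} (hx : x ∈ A) : t • x ∈ closure (A : Set V) := by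
  refine mem_closure_iff_nhds_zero.mpr fun U hU ↦ ?_
  obtain ⟨δ, hδ, hdil⟩ := hA U hU
  obtain ⟨n, hn⟩ := exists_nat_gt (t / δ)
  have hn_pos : (0 : 𝕜) < n := (div_nonneg ht hδ.le).trans_lt hn
  have hle : t / n ≤ δ := (div_le_comm₀ hn_pos hδ).mpr hn.le
  have hnx : n • x ∈ A := nsmul_mem_of_ne_zero hx (Nat.cast_pos.mp hn_pos).ne'
  have hsmul : (t / n) • n • x = t • x := by
    rw [← Nat.cast_smul_eq_nsmul 𝕜, smul_smul, div_mul_cancel₀ t hn_pos.ne']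
  exact hsmul ▸ hdil (n • x) hnx (t / n) (by positivity) hle

variable [ContinuousConstSMul 𝕜 V]

theorem IsApproxDiluable.smul_mem_closure (hA : IsApproxDiluable 𝕜 (A : Set V)) {t : 𝕜}
    (ht : 0 ≤ t) {z : V} (hz : z ∈ closure (A : Set V)) : t • z ∈ closure (A : Set V) :=
  closure_closure (s := (A : Set V)) ▸ map_mem_closure (continuous_const_smul t) hz
    fun _ hx ↦ hA.smul_mem_closure_of_mem ht hx

theorem closure_of_additive_approxDiluable_is_convex_cone_general
    (hA : IsApproxDiluable 𝕜 (A : Set V)) :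
    Convex 𝕜 (closure (A : Set V)) ∧
      ∀ z ∈ closure (A : Set V), ∀ t : 𝕜, 0 < t → t • z ∈ closure (A : Set V) :=
  ⟨fun _ hx _ hy _ _ ha hb _ ↦
      A.topologicalClosure.add_mem (hA.smul_mem_closure ha hx) (hA.smul_mem_closure hb hy),
    fun _ hz _ ht ↦ hA.smul_mem_closure ht.le hz⟩

end Closure

/-- The closure of an additive, approximately diluable subset of a
finite-dimensional real normed vector space is a convex cone. -/
theorem closure_of_additive_approxDiluable_is_convex_cone
    {V : Type*} [NormedAddCommGroup V] [NormedSpace ℝ V] [FiniteDimensional ℝ V]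
    (A : Set V)
    (hadd : ∀ x ∈ A, ∀ y ∈ A, x + y ∈ A)
    (hdil : ∀ ε : ℝ, 0 < ε → ∃ δ : ℝ, 0 < δ ∧
      ∀ x ∈ A, ∀ l : ℝ, 0 ≤ l → l ≤ δ → ∃ y ∈ A, ‖l • x - y‖ < ε) :
    Convex ℝ (closure A) ∧
      ∀ z ∈ closure A, ∀ t : ℝ, 0 < t → t • z ∈ closure A :=
  closure_of_additive_approxDiluable_is_convex_cone_general
    (A := ⟨A, fun hx hy ↦ hadd _ hx _ hy⟩) (isApproxDiluable_iff_norm.mpr hdil)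
end

section
/- The linear span of the classical entropy region Σ_n inside the space Finset (Fin n) → ℝ has dimension 2^n − 1; that is, Module.finrank ℝ (Submodule.span ℝ Σ_n) = 2^n − 1. -/
/-- Base-2 Shannon entropy of a probability mass function (on a finite type this
is the finite sum `-∑ x, q x * log₂ (q x)`, with `0 * log₂ 0 = 0`). -/
noncomputable def shannonEntropy {X : Type} (q : PMF X) : ℝ :=
  -∑' x, (q x).toReal * Real.logb 2 ((q x).toReal)

/-- The entropy vector of an `n`-partite random variable: for `I ⊆ Fin n`, the
Shannon entropy of the marginal of `p` on the coordinates in `I`. -/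
noncomputable def entropyVector {n : ℕ} {𝒳 : Fin n → Type} (p : PMF (∀ i, 𝒳 i)) :
    Finset (Fin n) → ℝ :=
  fun I => shannonEntropy (p.map fun x => fun i : I => x i.1)

/-- The classical entropy region `Σ_n`: all entropy vectors of `n`-partite random
variables on nonempty finite alphabets. -/
def classicalEntropyRegion (n : ℕ) : Set (Finset (Fin n) → ℝ) :=
  { v | ∃ (𝒳 : Fin n → Type) (_ : ∀ i, Finite (𝒳 i)) (_ : ∀ i, Nonempty (𝒳 i))
      (p : PMF (∀ i, 𝒳 i)), v = entropyVector p }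

/-!
Every entropy vector vanishes at `∅`. Conversely, a uniform bit shared by the parties in `J` has
entropy vector `1 - [I ⊆ Jᶜ]`. The indicators `[I ⊆ K]` span all functions on `Finset (Fin n)` by
Möbius inversion, so their images `[I ⊆ K] - 1` under the projection `f ↦ f - f ∅` span the
hyperplane of functions vanishing at `∅`.
-/

section Order

variable {R α : Type*} [Ring R] [PartialOrder α] [Finite α]

theorem single_mem_span_range_indicator_Iic [DecidableEq α] (a : α) :
    (Pi.single a 1 : α → R) ∈
      Submodule.span R (Set.range fun b : α => (Set.Iic b).indicator (1 : α → R)) := by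
  classical
  have := Fintype.ofFinite α
  induction a using WellFoundedLT.induction with
  | ind a ih =>
    have single_eq_sub_sum : (Pi.single a 1 : α → R) =
        (Set.Iic a).indicator 1 - ∑ b with b < a, Pi.single b 1 := by
      funext c
      simp only [Pi.sub_apply, Finset.sum_apply, Pi.single_apply, Finset.sum_ite_eq,
        Finset.mem_filter_univ, Set.indicator_apply, Set.mem_Iic, Pi.one_apply, le_iff_eq_or_lt]
      by_cases hc : c = a <;> simp [hc]
    rw [single_eq_sub_sum]
    exact sub_mem (Submodule.subset_span ⟨a, rfl⟩)
      (sum_mem fun b hb => ih b (Finset.mem_filter_univ b |>.mp hb))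

theorem span_range_indicator_Iic :
    Submodule.span R (Set.range fun a : α => (Set.Iic a).indicator (1 : α → R)) = ⊤ := by
  classical
  have := Fintype.ofFinite α
  refine top_unique ((Pi.basisFun R α).span_eq.ge.trans (Submodule.span_le.mpr ?_))
  rintro _ ⟨a, rfl⟩
  rw [Pi.basisFun_apply]
  exact single_mem_span_range_indicator_Iic a

theorem span_range_one_sub_indicator_Iic [OrderBot α] :
    Submodule.span R (Set.range fun a : α => 1 - (Set.Iic a).indicator (1 : α → R)) =
      LinearMap.ker (LinearMap.proj ⊥ : (α → R) →ₗ[R] R) := by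
  set S := Submodule.span R (Set.range fun a : α => 1 - (Set.Iic a).indicator (1 : α → R))
  let subBot : (α → R) →ₗ[R] (α → R) := LinearMap.id - (LinearMap.proj ⊥).smulRight 1
  have comap_subBot : S.comap subBot = ⊤ := by
    refine top_unique (span_range_indicator_Iic.ge.trans (Submodule.span_le.mpr ?_))
    rintro _ ⟨a, rfl⟩
    have subBot_indicator : subBot ((Set.Iic a).indicator 1) =
        -(1 - (Set.Iic a).indicator 1) := by
      simp [subBot]
    rw [SetLike.mem_coe, Submodule.mem_comap, subBot_indicator]
    exact neg_mem (Submodule.subset_span ⟨a, rfl⟩)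
  apply le_antisymm
  · rw [Submodule.span_le]
    rintro _ ⟨a, rfl⟩
    simp
  · intro f (hf : f ⊥ = 0)
    have subBot_f : subBot f = f := by simp [subBot, hf]
    rw [← subBot_f, ← Submodule.mem_comap, comap_subBot]
    exact Submodule.mem_top

end Order

section Entropy

variable {X Y : Type}

theorem shannonEntropy_pure (a : X) : shannonEntropy (PMF.pure a) = 0 := by
  classical
  have summand_eq_zero (x : X) :
      (PMF.pure a x).toReal * Real.logb 2 (PMF.pure a x).toReal = 0 := by
    rw [PMF.pure_apply]
    split_ifs <;> simp
  simp only [shannonEntropy, summand_eq_zero, tsum_zero, neg_zero]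

theorem shannonEntropy_map_of_injective (q : PMF X) {f : X → Y} (hf : Function.Injective f) :
    shannonEntropy (q.map f) = shannonEntropy q := by
  classical
  have map_apply_image (x : X) : q.map f (f x) = q x := by
    simp [PMF.map_apply, hf.eq_iff]
  have support_subset : Function.support
      (fun y => (q.map f y).toReal * Real.logb 2 (q.map f y).toReal) ⊆ Set.range f := by
    intro y hy
    have mem_support : y ∈ (q.map f).support := by
      rw [PMF.mem_support_iff]
      intro map_eq_zero
      exact hy (by simp only [map_eq_zero, ENNReal.toReal_zero, zero_mul])
    rw [PMF.support_map] at mem_support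
    exact Set.image_subset_range f _ mem_support
  rw [shannonEntropy, ← hf.tsum_eq support_subset]
  simp only [map_apply_image, shannonEntropy]

theorem shannonEntropy_uniformOfFintype [Fintype X] [Nonempty X] :
    shannonEntropy (PMF.uniformOfFintype X) = Real.logb 2 (Fintype.card X) := by
  simp [shannonEntropy, Real.logb_inv]

end Entropy

section EntropyVector

variable {n : ℕ}

theorem entropyVector_empty {𝒳 : Fin n → Type} (p : PMF (∀ i, 𝒳 i)) :
    entropyVector p ∅ = 0 := by
  have restrict_eq_const : (fun (x : ∀ i, 𝒳 i) (i : (∅ : Finset (Fin n))) => x i) =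
      Function.const _ default := Subsingleton.elim _ _
  rw [entropyVector, restrict_eq_const, PMF.map_const, shannonEntropy_pure]

variable {X : Type}

/-- The `n`-partite random variable in which the parties in `J` all hold the same sample of `q`,
while the other parties hold the constant `x₀`. -/
noncomputable def sharedSample (q : PMF X) (x₀ : X) (J : Finset (Fin n)) : PMF (Fin n → X) :=
  q.map fun x i => if i ∈ J then x else x₀

theorem entropyVector_sharedSample (q : PMF X) (x₀ : X) (I J : Finset (Fin n)) :
    entropyVector (sharedSample q x₀ J) I = if Disjoint I J then 0 else shannonEntropy q := by
  rw [entropyVector, sharedSample, PMF.map_comp]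
  split_ifs with h
  · have restrict_eq_const : (fun (x : Fin n → X) (i : I) => x i) ∘
        (fun x i => if i ∈ J then x else x₀) = Function.const X fun _ => x₀ := by
      funext x i
      exact if_neg (Finset.disjoint_left.mp h i.2)
    rw [restrict_eq_const, PMF.map_const, shannonEntropy_pure]
  · obtain ⟨i, hiI, hiJ⟩ := Finset.not_disjoint_iff.mp h
    refine shannonEntropy_map_of_injective q fun x y hxy => ?_
    simpa [hiJ] using congrFun hxy ⟨i, hiI⟩

theorem one_sub_indicator_Iic_mem_classicalEntropyRegion (K : Finset (Fin n)) :
    1 - (Set.Iic K).indicator 1 ∈ classicalEntropyRegion n := by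
  refine ⟨fun _ => Bool, inferInstance, inferInstance,
    sharedSample (PMF.uniformOfFintype Bool) false Kᶜ, ?_⟩
  funext I
  simp only [entropyVector_sharedSample, shannonEntropy_uniformOfFintype,
    disjoint_compl_right_iff]
  by_cases hIK : I ≤ K <;> simp [hIK]

theorem span_classicalEntropyRegion (n : ℕ) :
    Submodule.span ℝ (classicalEntropyRegion n) =
      LinearMap.ker (LinearMap.proj ∅ : (Finset (Fin n) → ℝ) →ₗ[ℝ] ℝ) := by
  apply le_antisymm
  · rw [Submodule.span_le]
    rintro _ ⟨𝒳, _, _, p, rfl⟩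
    exact entropyVector_empty p
  · rw [← Finset.bot_eq_empty, ← span_range_one_sub_indicator_Iic]
    exact Submodule.span_mono
      (Set.range_subset_iff.mpr one_sub_indicator_Iic_mem_classicalEntropyRegion)

end EntropyVector

/-- The span of the classical entropy region has dimension `2^n - 1`. -/
theorem finrank_span_classicalEntropyRegion (n : ℕ) :
    Module.finrank ℝ (Submodule.span ℝ (classicalEntropyRegion n)) = 2 ^ n - 1 := by
  have proj_ne_zero : (LinearMap.proj ∅ : (Finset (Fin n) → ℝ) →ₗ[ℝ] ℝ) ≠ 0 :=
    fun h => one_ne_zero (LinearMap.congr_fun h 1)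
  have finrank_ker := Module.Dual.finrank_ker_add_one_of_ne_zero proj_ne_zero
  rw [Module.finrank_fintype_fun_eq_card, Fintype.card_finset, Fintype.card_fin] at finrank_ker
  rw [span_classicalEntropyRegion]
  exact Nat.eq_sub_of_add_eq finrank_ker
end

section
/- The topological closure of the quantum entropy region Γ_n inside the space Finset (Fin n) → ℝ is a convex cone: closure(Γ_n) is a convex set, and t • v ∈ closure(Γ_n) for every v ∈ closure(Γ_n) and every real t > 0. -/
open scoped ComplexOrder

/-- Von Neumann entropy (base 2) of a matrix: `-∑ k, λ_k * log₂ λ_k` over the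
eigenvalues of the matrix if it is Hermitian (and `0` otherwise). -/
noncomputable def vonNeumannEntropy {X : Type} [Fintype X] [DecidableEq X]
    (M : Matrix X X ℂ) : ℝ :=
  letI := Classical.propDecidable M.IsHermitian
  if h : M.IsHermitian then -∑ k, h.eigenvalues k * Real.logb 2 (h.eigenvalues k)
  else 0

/-- Glue an assignment on `I` and an assignment on `Iᶜ` to a full assignment. -/
def glueAssignment {n : ℕ} {d : Fin n → ℕ} (I : Finset (Fin n))
    (a : ∀ i : I, Fin (d i.1)) (c : ∀ i : (Iᶜ : Finset (Fin n)), Fin (d i.1)) :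
    ∀ i : Fin n, Fin (d i) :=
  fun i => if h : i ∈ I then a ⟨i, h⟩ else c ⟨i, Finset.mem_compl.mpr h⟩

/-- The reduced density matrix `ρ_I`: partial trace of `ρ` over the systems
outside of `I`. -/
noncomputable def reducedState {n : ℕ} {d : Fin n → ℕ}
    (ρ : Matrix (∀ i, Fin (d i)) (∀ i, Fin (d i)) ℂ) (I : Finset (Fin n)) :
    Matrix (∀ i : I, Fin (d i.1)) (∀ i : I, Fin (d i.1)) ℂ :=
  fun a b => ∑ c : ∀ i : (Iᶜ : Finset (Fin n)), Fin (d i.1),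
    ρ (glueAssignment I a c) (glueAssignment I b c)

/-- The entropy vector `s(ρ)` of an `n`-partite density matrix. -/
noncomputable def qEntropyVector {n : ℕ} {d : Fin n → ℕ}
    (ρ : Matrix (∀ i, Fin (d i)) (∀ i, Fin (d i)) ℂ) : Finset (Fin n) → ℝ :=
  fun I => vonNeumannEntropy (reducedState ρ I)

/-- The quantum entropy region `Γ_n`: all entropy vectors of `n`-partite density
matrices (positive semidefinite, trace one), over all local dimensions. -/
def quantumEntropyRegion (n : ℕ) : Set (Finset (Fin n) → ℝ) :=
  { v | ∃ (d : Fin n → ℕ) (_ : ∀ i, 1 ≤ d i)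
      (ρ : Matrix (∀ i, Fin (d i)) (∀ i, Fin (d i)) ℂ),
        ρ.PosSemidef ∧ ρ.trace = 1 ∧ v = qEntropyVector ρ }

/-!
Combining the `i`-th systems of two states into one, for every `i`, turns the tensor product of the
states into another `n`-partite state, whose entropy vector is the sum of the two. Hence `Γ_n` is
an additive monoid, and so is its closure; it remains to scale by a real `t ≥ 0`.

For `t ≤ m`, mix the `m`-th tensor power of `ρ`, with probability `p = t / m`, with a state of zero
entropy, placing the two branches in orthogonal subspaces *of every single system*, so that each
non-empty marginal can tell them apart. The marginal on `I` then has entropy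
`p * m * S(ρ_I) + h(p) = t * S(ρ_I) + h(t / m)`, where `h` is the binary entropy, and
`h(t / m) → 0` as `m → ∞`.
-/

open Matrix Polynomial Filter Topology
open scoped Kronecker

section Entropy

theorem isHermitian_diagonal_ofReal {α : Type*} [DecidableEq α] (l : α → ℝ) :
    (diagonal fun x => (l x : ℂ)).IsHermitian :=
  isHermitian_diagonal_of_self_adjoint _ <| funext fun x => Complex.conj_ofReal (l x)

variable {α β : Type} [Fintype α] [DecidableEq α] [Fintype β] [DecidableEq β]

theorem vonNeumannEntropy_eq_sum_eigenvalues {A : Matrix α α ℂ} (hA : A.IsHermitian) :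
    vonNeumannEntropy A = (∑ k, Real.negMulLog (hA.eigenvalues k)) / Real.log 2 := by
  rw [vonNeumannEntropy, dif_pos hA, Finset.sum_div, ← Finset.sum_neg_distrib]
  refine Finset.sum_congr rfl fun k _ => ?_
  rw [Real.negMulLog, Real.logb]
  ring

theorem vonNeumannEntropy_eq_sum_roots_charpoly {A : Matrix α α ℂ} (hA : A.IsHermitian) :
    vonNeumannEntropy A =
      (A.charpoly.roots.map fun z => Real.negMulLog z.re).sum / Real.log 2 := by
  rw [vonNeumannEntropy_eq_sum_eigenvalues hA, hA.roots_charpoly_eq_eigenvalues]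
  simp

theorem vonNeumannEntropy_isometry_conj {U : Matrix β α ℂ} (hU : Uᴴ * U = 1)
    {A : Matrix α α ℂ} (hA : A.IsHermitian) :
    vonNeumannEntropy (U * A * Uᴴ) = vonNeumannEntropy A := by
  have hcharpoly : (X ^ Fintype.card α * (U * A * Uᴴ).charpoly : ℂ[X]) =
      X ^ Fintype.card β * A.charpoly := by
    rw [charpoly_mul_comm', ← Matrix.mul_assoc, hU, Matrix.one_mul]
  have hsum (k : ℕ) {p : ℂ[X]} (hp : p ≠ 0) :
      ((X ^ k * p : ℂ[X]).roots.map fun z => Real.negMulLog z.re).sum =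
        (p.roots.map fun z => Real.negMulLog z.re).sum := by
    rw [roots_mul (mul_ne_zero (pow_ne_zero _ X_ne_zero) hp)]
    simp [Multiset.map_nsmul, Multiset.sum_nsmul]
  rw [vonNeumannEntropy_eq_sum_roots_charpoly hA,
    vonNeumannEntropy_eq_sum_roots_charpoly (isHermitian_mul_mul_conjTranspose U hA),
    ← hsum _ (charpoly_monic (U * A * Uᴴ)).ne_zero, hcharpoly,
    hsum _ (charpoly_monic A).ne_zero]

theorem vonNeumannEntropy_fromBlocks_zero {A : Matrix α α ℂ} {B : Matrix β β ℂ}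
    (hA : A.IsHermitian) (hB : B.IsHermitian) :
    vonNeumannEntropy (fromBlocks A 0 0 B) = vonNeumannEntropy A + vonNeumannEntropy B := by
  rw [vonNeumannEntropy_eq_sum_roots_charpoly (hA.fromBlocks conjTranspose_zero hB),
    charpoly_fromBlocks_zero₁₂,
    roots_mul (mul_ne_zero (charpoly_monic A).ne_zero (charpoly_monic B).ne_zero),
    Multiset.map_add, Multiset.sum_add, add_div, vonNeumannEntropy_eq_sum_roots_charpoly hA,
    vonNeumannEntropy_eq_sum_roots_charpoly hB]

theorem vonNeumannEntropy_add_of_orthogonal {γ : Type} [Fintype γ] [DecidableEq γ]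
    {U : Matrix γ α ℂ} {V : Matrix γ β ℂ} (hU : Uᴴ * U = 1) (hV : Vᴴ * V = 1)
    (hUV : Uᴴ * V = 0) {A : Matrix α α ℂ} {B : Matrix β β ℂ} (hA : A.IsHermitian)
    (hB : B.IsHermitian) :
    vonNeumannEntropy (U * A * Uᴴ + V * B * Vᴴ) = vonNeumannEntropy A + vonNeumannEntropy B := by
  have hVU : Vᴴ * U = 0 := by simpa using congrArg conjTranspose hUV
  have hisometry : (fromCols U V)ᴴ * fromCols U V = 1 := by
    rw [conjTranspose_fromCols_eq_fromRows_conjTranspose, fromRows_mul_fromCols, hU, hV, hUV, hVU,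
      fromBlocks_one]
  have hconj : U * A * Uᴴ + V * B * Vᴴ =
      fromCols U V * fromBlocks A 0 0 B * (fromCols U V)ᴴ := by
    simp [conjTranspose_fromCols_eq_fromRows_conjTranspose, fromCols_mul_fromBlocks,
      fromCols_mul_fromRows]
  rw [hconj, vonNeumannEntropy_isometry_conj hisometry (hA.fromBlocks conjTranspose_zero hB),
    vonNeumannEntropy_fromBlocks_zero hA hB]

theorem vonNeumannEntropy_diagonal (l : α → ℝ) :
    vonNeumannEntropy (diagonal fun x => (l x : ℂ)) =
      (∑ x, Real.negMulLog (l x)) / Real.log 2 := by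
  rw [vonNeumannEntropy_eq_sum_roots_charpoly (isHermitian_diagonal_ofReal l), charpoly_diagonal,
    roots_prod _ _ (Finset.prod_ne_zero_iff.mpr fun x _ => X_sub_C_ne_zero _)]
  simp

theorem vonNeumannEntropy_isometry_conj_diagonal {U : Matrix β α ℂ} (hU : Uᴴ * U = 1)
    (l : α → ℝ) :
    vonNeumannEntropy (U * diagonal (fun x => (l x : ℂ)) * Uᴴ) =
      (∑ x, Real.negMulLog (l x)) / Real.log 2 := by
  rw [vonNeumannEntropy_isometry_conj hU (isHermitian_diagonal_ofReal l),
    vonNeumannEntropy_diagonal]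

theorem exists_eq_unitary_conj_diagonal_eigenvalues {A : Matrix α α ℂ} (hA : A.IsHermitian) :
    ∃ U : Matrix α α ℂ, Uᴴ * U = 1 ∧
      A = U * diagonal (fun x => (hA.eigenvalues x : ℂ)) * Uᴴ := by
  refine ⟨hA.eigenvectorUnitary, Unitary.coe_star_mul_self _, ?_⟩
  conv_lhs => rw [hA.spectral_theorem, Unitary.conjStarAlgAut_apply]
  rfl

theorem re_trace_eq_sum_eigenvalues {A : Matrix α α ℂ} (hA : A.IsHermitian) :
    A.trace.re = ∑ x, hA.eigenvalues x := by
  simp [hA.trace_eq_sum_eigenvalues]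

theorem vonNeumannEntropy_smul {A : Matrix α α ℂ} (hA : A.IsHermitian) (c : ℝ) :
    vonNeumannEntropy (c • A) =
      c * vonNeumannEntropy A + A.trace.re * (Real.negMulLog c / Real.log 2) := by
  obtain ⟨U, hU, hUA⟩ := exists_eq_unitary_conj_diagonal_eigenvalues hA
  have hconj : c • A = U * diagonal (fun x => ((c * hA.eigenvalues x : ℝ) : ℂ)) * Uᴴ := by
    conv_lhs => rw [hUA, ← Matrix.smul_mul, ← Matrix.mul_smul, ← diagonal_smul]
    congr! 4
    simp
  rw [hconj, vonNeumannEntropy_isometry_conj_diagonal hU, vonNeumannEntropy_eq_sum_eigenvalues hA,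
    re_trace_eq_sum_eigenvalues hA]
  simp only [Real.negMulLog_mul, Finset.sum_add_distrib, ← Finset.mul_sum, ← Finset.sum_mul]
  ring

theorem vonNeumannEntropy_kronecker {A : Matrix α α ℂ} {B : Matrix β β ℂ}
    (hA : A.IsHermitian) (hB : B.IsHermitian) :
    vonNeumannEntropy (A ⊗ₖ B) =
      B.trace.re * vonNeumannEntropy A + A.trace.re * vonNeumannEntropy B := by
  obtain ⟨U, hU, hUA⟩ := exists_eq_unitary_conj_diagonal_eigenvalues hA
  obtain ⟨V, hV, hVB⟩ := exists_eq_unitary_conj_diagonal_eigenvalues hB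
  have hUV : (U ⊗ₖ V)ᴴ * (U ⊗ₖ V) = 1 := by
    rw [conjTranspose_kronecker, ← mul_kronecker_mul, hU, hV, one_kronecker_one]
  have hconj : A ⊗ₖ B = (U ⊗ₖ V) *
      diagonal (fun p => ((hA.eigenvalues p.1 * hB.eigenvalues p.2 : ℝ) : ℂ)) * (U ⊗ₖ V)ᴴ := by
    conv_lhs => rw [hUA, hVB, mul_kronecker_mul, mul_kronecker_mul, diagonal_kronecker_diagonal,
      ← conjTranspose_kronecker]
    simp only [Complex.ofReal_mul]
  rw [hconj, vonNeumannEntropy_isometry_conj_diagonal hUV, vonNeumannEntropy_eq_sum_eigenvalues hA,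
    vonNeumannEntropy_eq_sum_eigenvalues hB, re_trace_eq_sum_eigenvalues hA,
    re_trace_eq_sum_eigenvalues hB, Fintype.sum_prod_type]
  simp only [Real.negMulLog_mul, Finset.sum_add_distrib, ← Finset.mul_sum, ← Finset.sum_mul]
  ring

theorem vonNeumannEntropy_submatrix_equiv {A : Matrix α α ℂ} (hA : A.IsHermitian) (e : β ≃ α) :
    vonNeumannEntropy (A.submatrix e e) = vonNeumannEntropy A := by
  rw [vonNeumannEntropy_eq_sum_roots_charpoly hA,
    vonNeumannEntropy_eq_sum_roots_charpoly (hA.submatrix e), ← charpoly_reindex e.symm A]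
  rfl

theorem vonNeumannEntropy_one : vonNeumannEntropy (1 : Matrix α α ℂ) = 0 := by
  simpa using vonNeumannEntropy_diagonal (fun _ : α => 1)

theorem vonNeumannEntropy_eq_zero_of_unique [Unique α] {A : Matrix α α ℂ} (hA : A.trace = 1) :
    vonNeumannEntropy A = 0 := by
  have hA_one : A = 1 := by
    refine Matrix.ext fun i j => ?_
    rw [Subsingleton.elim i default, Subsingleton.elim j default, one_apply_eq]
    simpa [trace] using hA
  rw [hA_one, vonNeumannEntropy_one]

end Entropy

section PartialTrace

variable {α β γ δ α' β' : Type*} [Fintype α] [Fintype β] [Fintype γ] [Fintype δ]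

/-- The partial trace of a bipartite operator over its second system. -/
def partialTrace {R : Type*} [AddCommMonoid R] (M : Matrix (α' × γ) (β' × γ) R) :
    Matrix α' β' R :=
  of fun a b => ∑ c, M (a, c) (b, c)

theorem trace_partialTrace {R : Type*} [AddCommMonoid R] (M : Matrix (α × γ) (α × γ) R) :
    (partialTrace M).trace = M.trace :=
  (Fintype.sum_prod_type fun p => M p p).symm

variable {R : Type*} [CommSemiring R]

theorem partialTrace_kronecker_one_mul [DecidableEq γ] (A : Matrix α' α R)
    (M : Matrix (α × γ) (β' × γ) R) :
    partialTrace ((A ⊗ₖ (1 : Matrix γ γ R)) * M) = A * partialTrace M := by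
  ext a b
  simp only [partialTrace, of_apply, mul_apply, kronecker_apply, one_apply, mul_ite, mul_one,
    mul_zero, ite_mul, zero_mul, Fintype.sum_prod_type, Finset.sum_ite_eq, Finset.mem_univ,
    if_true, Finset.mul_sum]
  exact Finset.sum_comm

theorem partialTrace_mul_kronecker_one [DecidableEq γ] (M : Matrix (α' × γ) (α × γ) R)
    (B : Matrix α β' R) :
    partialTrace (M * (B ⊗ₖ (1 : Matrix γ γ R))) = partialTrace M * B := by
  ext a b
  simp only [partialTrace, of_apply, mul_apply, kronecker_apply, one_apply, mul_ite, mul_one,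
    mul_zero, Fintype.sum_prod_type, Finset.sum_ite_eq', Finset.mem_univ, if_true, Finset.sum_mul]
  exact Finset.sum_comm

theorem partialTrace_one_kronecker_mul_comm [DecidableEq α] [DecidableEq β] (C : Matrix δ γ R)
    (M : Matrix (α × γ) (β × δ) R) :
    partialTrace (((1 : Matrix α α R) ⊗ₖ C) * M) =
      partialTrace (M * ((1 : Matrix β β R) ⊗ₖ C)) := by
  ext a b
  simp only [partialTrace, of_apply, mul_apply, kronecker_apply, one_apply, ite_mul, one_mul,
    zero_mul, mul_ite, mul_zero, Fintype.sum_prod_type_right, Finset.sum_ite_eq,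
    Finset.sum_ite_eq', Finset.mem_univ, if_true]
  rw [Finset.sum_comm]
  simp only [mul_comm]

theorem partialTrace_isometry_conj [StarRing R] [DecidableEq γ] (A : Matrix α' α R)
    {B : Matrix δ γ R} (hB : Bᴴ * B = 1) (M : Matrix (α × γ) (α × γ) R) :
    partialTrace ((A ⊗ₖ B) * M * (A ⊗ₖ B)ᴴ) = A * partialTrace M * Aᴴ := by
  classical
  have hAB : A ⊗ₖ B = (A ⊗ₖ (1 : Matrix δ δ R)) * ((1 : Matrix α α R) ⊗ₖ B) := by
    rw [← mul_kronecker_mul, Matrix.mul_one, Matrix.one_mul]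
  calc partialTrace ((A ⊗ₖ B) * M * (A ⊗ₖ B)ᴴ)
      = partialTrace ((A ⊗ₖ (1 : Matrix δ δ R)) * (((1 : Matrix α α R) ⊗ₖ B) *
          (M * ((1 : Matrix α α R) ⊗ₖ Bᴴ))) * (Aᴴ ⊗ₖ (1 : Matrix δ δ R))) := by
        simp only [hAB, conjTranspose_mul, conjTranspose_kronecker, conjTranspose_one,
          Matrix.mul_assoc]
    _ = A * partialTrace (M * ((1 : Matrix α α R) ⊗ₖ (Bᴴ * B))) * Aᴴ := by
        rw [partialTrace_mul_kronecker_one, partialTrace_kronecker_one_mul,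
          partialTrace_one_kronecker_mul_comm, Matrix.mul_assoc M, ← mul_kronecker_mul,
          Matrix.one_mul]
    _ = A * partialTrace M * Aᴴ := by rw [hB, one_kronecker_one, Matrix.mul_one]

end PartialTrace

section PiKronecker

variable {ι R : Type*} [Fintype ι] [CommSemiring R] {α β γ : ι → Type*}

/-- The Kronecker product of a finite family of matrices, with rows and columns indexed by
assignments of local indices. -/
def piKronecker (A : ∀ i, Matrix (α i) (β i) R) : Matrix (∀ i, α i) (∀ i, β i) R :=
  of fun a b => ∏ i, A i (a i) (b i)

theorem piKronecker_mul [DecidableEq ι] [∀ i, Fintype (β i)] (A : ∀ i, Matrix (α i) (β i) R)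
    (B : ∀ i, Matrix (β i) (γ i) R) :
    piKronecker A * piKronecker B = piKronecker fun i => A i * B i := by
  ext a c
  simp only [piKronecker, mul_apply, of_apply, ← Finset.prod_mul_distrib]
  rw [Finset.prod_univ_sum, Fintype.piFinset_univ]

theorem piKronecker_one [∀ i, DecidableEq (α i)] [DecidableEq (∀ i, α i)] :
    piKronecker (fun i => (1 : Matrix (α i) (α i) R)) = 1 := by
  ext a b
  simp only [piKronecker, of_apply, one_apply, Finset.prod_ite_zero, Finset.prod_const_one,
    Finset.mem_univ, true_imp_iff, funext_iff]

theorem piKronecker_zero [Nonempty ι] :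
    piKronecker (fun i => (0 : Matrix (α i) (β i) R)) = 0 := by
  ext a b
  exact Finset.prod_eq_zero (Finset.mem_univ (Classical.arbitrary ι)) rfl

theorem conjTranspose_piKronecker [StarRing R] (A : ∀ i, Matrix (α i) (β i) R) :
    (piKronecker A)ᴴ = piKronecker fun i => (A i)ᴴ := by
  ext b a
  simp [piKronecker, star_prod]

theorem piKronecker_isometry [DecidableEq ι] [StarRing R] [∀ i, Fintype (α i)]
    [∀ i, DecidableEq (β i)] [DecidableEq (∀ i, β i)] {V : ∀ i, Matrix (α i) (β i) R}
    (hV : ∀ i, (V i)ᴴ * V i = 1) :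
    (piKronecker V)ᴴ * piKronecker V = 1 := by
  simp only [conjTranspose_piKronecker, piKronecker_mul, hV, piKronecker_one]

end PiKronecker

section LocalDirectSum

theorem conjTranspose_one_submatrix_mul_one_submatrix {R α β γ : Type*} [Semiring R] [StarRing R]
    [Fintype α] [DecidableEq α] (f : β → α) (g : γ → α) :
    ((1 : Matrix α α R).submatrix id f)ᴴ * (1 : Matrix α α R).submatrix id g =
      (1 : Matrix α α R).submatrix f g := by
  rw [conjTranspose_submatrix, conjTranspose_one, ← submatrix_mul _ _ _ _ _ Function.bijective_id,
    Matrix.one_mul]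

theorem one_submatrix_isometry {R α β : Type*} [Semiring R] [StarRing R] [Fintype α]
    [DecidableEq α] [DecidableEq β] {f : β → α} (hf : Function.Injective f) :
    ((1 : Matrix α α R).submatrix id f)ᴴ * (1 : Matrix α α R).submatrix id f = 1 := by
  rw [conjTranspose_one_submatrix_mul_one_submatrix, submatrix_one _ hf]

variable {ι : Type} (d e : ι → ℕ)

/-- The isometry embedding `⨂ i, ℂ ^ d i` into `⨂ i, (ℂ ^ d i ⊕ ℂ ^ e i)` through the left
summand of every factor. -/
noncomputable def localInl [Fintype ι] :
    Matrix (∀ i, Fin (d i + e i)) (∀ i, Fin (d i)) ℂ :=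
  piKronecker fun i =>
    (1 : Matrix (Fin (d i + e i)) (Fin (d i + e i)) ℂ).submatrix id (Fin.castAdd (e i))

/-- The isometry embedding `⨂ i, ℂ ^ e i` into `⨂ i, (ℂ ^ d i ⊕ ℂ ^ e i)` through the right
summand of every factor. -/
noncomputable def localInr [Fintype ι] :
    Matrix (∀ i, Fin (d i + e i)) (∀ i, Fin (e i)) ℂ :=
  piKronecker fun i =>
    (1 : Matrix (Fin (d i + e i)) (Fin (d i + e i)) ℂ).submatrix id (Fin.natAdd (d i))

variable [Fintype ι] [DecidableEq ι]

theorem localInl_isometry : (localInl d e)ᴴ * localInl d e = 1 :=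
  piKronecker_isometry fun i => one_submatrix_isometry (Fin.castAdd_injective (d i) (e i))

theorem localInr_isometry : (localInr d e)ᴴ * localInr d e = 1 :=
  piKronecker_isometry fun i => one_submatrix_isometry (Fin.natAdd_injective (e i) (d i))

theorem localInl_conjTranspose_mul_localInr [Nonempty ι] :
    (localInl d e)ᴴ * localInr d e = 0 := by
  have horthogonal (i : ι) :
      ((1 : Matrix (Fin (d i + e i)) (Fin (d i + e i)) ℂ).submatrix id (Fin.castAdd (e i)))ᴴ *
        (1 : Matrix (Fin (d i + e i)) (Fin (d i + e i)) ℂ).submatrix id (Fin.natAdd (d i)) = 0 := by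
    rw [conjTranspose_one_submatrix_mul_one_submatrix]
    ext a b
    exact one_apply_ne (Fin.ne_of_lt (a.2.trans_le (Nat.le_add_right (d i) b)))
  simp only [localInl, localInr, conjTranspose_piKronecker, piKronecker_mul, horthogonal,
    piKronecker_zero]

variable {d e}

/-- The operator acting as `A` on `⨂ i, ℂ ^ d i`, as `B` on `⨂ i, ℂ ^ e i`, and as zero on the
rest of `⨂ i, (ℂ ^ d i ⊕ ℂ ^ e i)`. Each single system can tell the two summands apart. -/
noncomputable def localDirectSum (A : Matrix (∀ i, Fin (d i)) (∀ i, Fin (d i)) ℂ)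
    (B : Matrix (∀ i, Fin (e i)) (∀ i, Fin (e i)) ℂ) :
    Matrix (∀ i, Fin (d i + e i)) (∀ i, Fin (d i + e i)) ℂ :=
  localInl d e * A * (localInl d e)ᴴ + localInr d e * B * (localInr d e)ᴴ

variable {A : Matrix (∀ i, Fin (d i)) (∀ i, Fin (d i)) ℂ}
  {B : Matrix (∀ i, Fin (e i)) (∀ i, Fin (e i)) ℂ}

theorem trace_localDirectSum : (localDirectSum A B).trace = A.trace + B.trace := by
  rw [localDirectSum, trace_add, trace_mul_comm, trace_mul_comm _ (localInr d e)ᴴ,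
    ← Matrix.mul_assoc, ← Matrix.mul_assoc, localInl_isometry, localInr_isometry, Matrix.one_mul,
    Matrix.one_mul]

theorem posSemidef_localDirectSum (hA : A.PosSemidef) (hB : B.PosSemidef) :
    (localDirectSum A B).PosSemidef :=
  (hA.mul_mul_conjTranspose_same _).add (hB.mul_mul_conjTranspose_same _)

theorem vonNeumannEntropy_localDirectSum [Nonempty ι] (hA : A.IsHermitian) (hB : B.IsHermitian) :
    vonNeumannEntropy (localDirectSum A B) = vonNeumannEntropy A + vonNeumannEntropy B :=
  vonNeumannEntropy_add_of_orthogonal (localInl_isometry d e) (localInr_isometry d e)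
    (localInl_conjTranspose_mul_localInr d e) hA hB

end LocalDirectSum

section LocalKronecker

variable {ι : Type} {d e : ι → ℕ}

/-- Splitting of every composite local index into its two components. -/
def localProdEquiv (d e : ι → ℕ) :
    (∀ i, Fin (d i * e i)) ≃ (∀ i, Fin (d i)) × (∀ i, Fin (e i)) :=
  (Equiv.piCongrRight fun _ => finProdFinEquiv.symm).trans
    (Equiv.arrowProdEquivProdArrow ι (fun i => Fin (d i)) (fun i => Fin (e i)))

/-- The tensor product of two multipartite operators, with the `i`-th system of the one and the
`i`-th system of the other combined into a single system. -/
def localKronecker (A : Matrix (∀ i, Fin (d i)) (∀ i, Fin (d i)) ℂ)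
    (B : Matrix (∀ i, Fin (e i)) (∀ i, Fin (e i)) ℂ) :
    Matrix (∀ i, Fin (d i * e i)) (∀ i, Fin (d i * e i)) ℂ :=
  (A ⊗ₖ B).submatrix (localProdEquiv d e) (localProdEquiv d e)

variable {A : Matrix (∀ i, Fin (d i)) (∀ i, Fin (d i)) ℂ}
  {B : Matrix (∀ i, Fin (e i)) (∀ i, Fin (e i)) ℂ}

theorem posSemidef_localKronecker [Finite ι] (hA : A.PosSemidef) (hB : B.PosSemidef) :
    (localKronecker A B).PosSemidef :=
  (hA.kronecker hB).submatrix _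

variable [Fintype ι] [DecidableEq ι]

theorem trace_localKronecker : (localKronecker A B).trace = A.trace * B.trace := by
  rw [← trace_kronecker]
  exact (localProdEquiv d e).sum_comp fun p => (A ⊗ₖ B) p p

theorem vonNeumannEntropy_localKronecker (hA : A.IsHermitian) (hB : B.IsHermitian) :
    vonNeumannEntropy (localKronecker A B) =
      B.trace.re * vonNeumannEntropy A + A.trace.re * vonNeumannEntropy B := by
  have hAB : (A ⊗ₖ B).IsHermitian := by
    rw [IsHermitian, conjTranspose_kronecker, hA, hB]
  rw [localKronecker, vonNeumannEntropy_submatrix_equiv hAB, vonNeumannEntropy_kronecker hA hB]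

end LocalKronecker

section ReducedState

variable {n : ℕ} {d e : Fin n → ℕ}

/-- `glueAssignment` as an equivalence. -/
def glueEquiv (d : Fin n → ℕ) (I : Finset (Fin n)) :
    (∀ i : I, Fin (d i)) × (∀ i : (Iᶜ : Finset (Fin n)), Fin (d i)) ≃ ∀ i, Fin (d i) where
  toFun p := glueAssignment I p.1 p.2
  invFun x := (fun i => x i, fun i => x i)
  left_inv p := by
    refine Prod.ext (funext fun i => dif_pos i.2) (funext fun i => ?_)
    exact dif_neg (Finset.mem_compl.mp i.2)
  right_inv x := by
    ext i
    simp [glueAssignment]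

theorem reducedState_eq_partialTrace (ρ : Matrix (∀ i, Fin (d i)) (∀ i, Fin (d i)) ℂ)
    (I : Finset (Fin n)) :
    reducedState ρ I = partialTrace (ρ.submatrix (glueEquiv d I) (glueEquiv d I)) :=
  rfl

theorem trace_reducedState (ρ : Matrix (∀ i, Fin (d i)) (∀ i, Fin (d i)) ℂ)
    (I : Finset (Fin n)) : (reducedState ρ I).trace = ρ.trace := by
  rw [reducedState_eq_partialTrace, trace_partialTrace]
  exact (glueEquiv d I).sum_comp fun x => ρ x x

theorem isHermitian_reducedState {ρ : Matrix (∀ i, Fin (d i)) (∀ i, Fin (d i)) ℂ}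
    (hρ : ρ.IsHermitian) (I : Finset (Fin n)) : (reducedState ρ I).IsHermitian := by
  ext a b
  simp only [conjTranspose_apply, reducedState, star_sum, hρ.apply]

theorem reducedState_add (ρ σ : Matrix (∀ i, Fin (d i)) (∀ i, Fin (d i)) ℂ)
    (I : Finset (Fin n)) : reducedState (ρ + σ) I = reducedState ρ I + reducedState σ I := by
  ext a b
  exact Finset.sum_add_distrib

theorem reducedState_smul (c : ℝ) (ρ : Matrix (∀ i, Fin (d i)) (∀ i, Fin (d i)) ℂ)
    (I : Finset (Fin n)) : reducedState (c • ρ) I = c • reducedState ρ I := by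
  ext a b
  simp only [reducedState, Matrix.smul_apply, Finset.smul_sum]

theorem piKronecker_submatrix_glueEquiv (V : ∀ i, Matrix (Fin (e i)) (Fin (d i)) ℂ)
    (I : Finset (Fin n)) :
    (piKronecker V).submatrix (glueEquiv e I) (glueEquiv d I) =
      piKronecker (fun i : I => V i) ⊗ₖ
        piKronecker (fun i : (Iᶜ : Finset (Fin n)) => V i) := by
  ext ⟨x, y⟩ ⟨a, b⟩
  simp only [submatrix_apply, kronecker_apply, piKronecker, of_apply, glueEquiv, Equiv.coe_fn_mk]
  rw [← Finset.prod_mul_prod_compl I, ← Finset.prod_coe_sort I, ← Finset.prod_coe_sort Iᶜ]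
  congr 1 <;> refine Finset.prod_congr rfl fun i _ => ?_
  · simp [glueAssignment]
  · simp [glueAssignment, Finset.mem_compl.mp i.2]

theorem reducedState_piKronecker_conj {V : ∀ i, Matrix (Fin (e i)) (Fin (d i)) ℂ}
    (hV : ∀ i, (V i)ᴴ * V i = 1) (ρ : Matrix (∀ i, Fin (d i)) (∀ i, Fin (d i)) ℂ)
    (I : Finset (Fin n)) :
    reducedState (piKronecker V * ρ * (piKronecker V)ᴴ) I =
      piKronecker (fun i : I => V i) * reducedState ρ I *
        (piKronecker (fun i : I => V i))ᴴ := by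
  rw [reducedState_eq_partialTrace, reducedState_eq_partialTrace,
    ← submatrix_mul_equiv _ _ _ (glueEquiv d I), ← submatrix_mul_equiv _ _ _ (glueEquiv d I),
    ← conjTranspose_submatrix, piKronecker_submatrix_glueEquiv]
  exact partialTrace_isometry_conj (piKronecker fun i : I => V i)
    (piKronecker_isometry fun i : (Iᶜ : Finset (Fin n)) => hV i) _

theorem reducedState_localInl_conj (e : Fin n → ℕ)
    (ρ : Matrix (∀ i, Fin (d i)) (∀ i, Fin (d i)) ℂ) (I : Finset (Fin n)) :
    reducedState (d := fun i => d i + e i) (localInl d e * ρ * (localInl d e)ᴴ) I =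
      localInl (fun i : I => d i) (fun i : I => e i) * reducedState ρ I *
        (localInl (fun i : I => d i) (fun i : I => e i))ᴴ :=
  reducedState_piKronecker_conj (e := fun i => d i + e i)
    (fun i => one_submatrix_isometry (Fin.castAdd_injective (d i) (e i))) ρ I

theorem reducedState_localInr_conj (d : Fin n → ℕ)
    (σ : Matrix (∀ i, Fin (e i)) (∀ i, Fin (e i)) ℂ) (I : Finset (Fin n)) :
    reducedState (d := fun i => d i + e i) (localInr d e * σ * (localInr d e)ᴴ) I =
      localInr (fun i : I => d i) (fun i : I => e i) * reducedState σ I *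
        (localInr (fun i : I => d i) (fun i : I => e i))ᴴ :=
  reducedState_piKronecker_conj (e := fun i => d i + e i)
    (fun i => one_submatrix_isometry (Fin.natAdd_injective (e i) (d i))) σ I

theorem reducedState_localDirectSum (ρ : Matrix (∀ i, Fin (d i)) (∀ i, Fin (d i)) ℂ)
    (σ : Matrix (∀ i, Fin (e i)) (∀ i, Fin (e i)) ℂ) (I : Finset (Fin n)) :
    reducedState (d := fun i => d i + e i) (localDirectSum ρ σ) I =
      localDirectSum (d := fun i : I => d i) (e := fun i : I => e i) (reducedState ρ I)
        (reducedState σ I) := by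
  rw [localDirectSum, reducedState_add, reducedState_localInl_conj, reducedState_localInr_conj,
    localDirectSum]

theorem localProdEquiv_glueAssignment (I : Finset (Fin n)) (a : ∀ i : I, Fin (d i * e i))
    (c : ∀ i : (Iᶜ : Finset (Fin n)), Fin (d i * e i)) :
    localProdEquiv d e (glueAssignment (d := fun i => d i * e i) I a c) =
      (glueAssignment I (localProdEquiv (fun i : I => d i) (fun i : I => e i) a).1
        (localProdEquiv (fun i : (Iᶜ : Finset (Fin n)) => d i) (fun i => e i) c).1,
       glueAssignment I (localProdEquiv (fun i : I => d i) (fun i : I => e i) a).2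
        (localProdEquiv (fun i : (Iᶜ : Finset (Fin n)) => d i) (fun i => e i) c).2) := by
  refine Prod.ext (funext fun i => ?_) (funext fun i => ?_) <;>
    by_cases hi : i ∈ I <;>
      simp [localProdEquiv, glueAssignment, Equiv.arrowProdEquivProdArrow, hi]

theorem reducedState_localKronecker (ρ : Matrix (∀ i, Fin (d i)) (∀ i, Fin (d i)) ℂ)
    (σ : Matrix (∀ i, Fin (e i)) (∀ i, Fin (e i)) ℂ) (I : Finset (Fin n)) :
    reducedState (d := fun i => d i * e i) (localKronecker ρ σ) I =
      localKronecker (d := fun i : I => d i) (e := fun i : I => e i) (reducedState ρ I)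
        (reducedState σ I) := by
  ext a b
  simp only [localKronecker, reducedState, submatrix_apply, kroneckerMap_apply,
    localProdEquiv_glueAssignment]
  rw [Finset.sum_mul_sum, ← Fintype.sum_prod_type']
  exact (localProdEquiv (fun i : (Iᶜ : Finset (Fin n)) => d i) (fun i => e i)).sum_comp
    fun p => ρ (glueAssignment I _ p.1) (glueAssignment I _ p.1) *
      σ (glueAssignment I _ p.2) (glueAssignment I _ p.2)

end ReducedState

section EntropyRegion

variable {n : ℕ} {d : Fin n → ℕ}

theorem qEntropyVector_empty {ρ : Matrix (∀ i, Fin (d i)) (∀ i, Fin (d i)) ℂ}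
    (hρ : ρ.trace = 1) : qEntropyVector ρ ∅ = 0 :=
  vonNeumannEntropy_eq_zero_of_unique ((trace_reducedState ρ ∅).trans hρ)

theorem zero_mem_quantumEntropyRegion : 0 ∈ quantumEntropyRegion n := by
  refine ⟨fun _ => 1, fun _ => le_rfl, 1, PosSemidef.one, by simp, funext fun I => ?_⟩
  exact (vonNeumannEntropy_eq_zero_of_unique ((trace_reducedState 1 I).trans (by simp))).symm

theorem add_mem_quantumEntropyRegion {v w : Finset (Fin n) → ℝ}
    (hv : v ∈ quantumEntropyRegion n) (hw : w ∈ quantumEntropyRegion n) :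
    v + w ∈ quantumEntropyRegion n := by
  obtain ⟨d, hd, ρ, hρ, hρ_trace, rfl⟩ := hv
  obtain ⟨e, he, σ, hσ, hσ_trace, rfl⟩ := hw
  refine ⟨fun i => d i * e i, fun i => Nat.mul_pos (hd i) (he i), localKronecker ρ σ,
    posSemidef_localKronecker hρ hσ, by rw [trace_localKronecker, hρ_trace, hσ_trace, one_mul],
    funext fun I => ?_⟩
  simp only [Pi.add_apply, qEntropyVector]
  rw [reducedState_localKronecker, vonNeumannEntropy_localKronecker
    (isHermitian_reducedState hρ.isHermitian I) (isHermitian_reducedState hσ.isHermitian I),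
    trace_reducedState, trace_reducedState, hρ_trace, hσ_trace, Complex.one_re, one_mul, one_mul]

/-- The quantum entropy region as an additive submonoid: entropy vectors add up under tensor
products of states. -/
def quantumEntropyAddSubmonoid (n : ℕ) : AddSubmonoid (Finset (Fin n) → ℝ) where
  carrier := quantumEntropyRegion n
  zero_mem' := zero_mem_quantumEntropyRegion
  add_mem' := add_mem_quantumEntropyRegion

theorem mixture_mem_quantumEntropyRegion {v w : Finset (Fin n) → ℝ}
    (hv : v ∈ quantumEntropyRegion n) (hw : w ∈ quantumEntropyRegion n) {p : ℝ} (hp₀ : 0 ≤ p)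
    (hp₁ : p ≤ 1) :
    (p • v + (1 - p) • w + (Real.binEntropy p / Real.log 2) • fun I => if I = ∅ then 0 else 1) ∈
      quantumEntropyRegion n := by
  obtain ⟨d, hd, ρ, hρ, hρ_trace, rfl⟩ := hv
  obtain ⟨e, _, σ, hσ, hσ_trace, rfl⟩ := hw
  have htrace : (localDirectSum (p • ρ) ((1 - p) • σ)).trace = 1 := by
    rw [trace_localDirectSum, trace_smul, trace_smul, hρ_trace, hσ_trace, ← add_smul,
      add_sub_cancel, one_smul]
  refine ⟨fun i => d i + e i, fun i => (hd i).trans (Nat.le_add_right _ _),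
    localDirectSum (p • ρ) ((1 - p) • σ),
    posSemidef_localDirectSum (hρ.smul hp₀) (hσ.smul (sub_nonneg.mpr hp₁)), htrace,
    funext fun I => ?_⟩
  rcases I.eq_empty_or_nonempty with rfl | hI
  · rw [qEntropyVector_empty htrace]
    simp [qEntropyVector_empty hρ_trace, qEntropyVector_empty hσ_trace]
  have : Nonempty I := hI.to_subtype
  have hρI := isHermitian_reducedState hρ.isHermitian I
  have hσI := isHermitian_reducedState hσ.isHermitian I
  simp only [Pi.add_apply, Pi.smul_apply, smul_eq_mul, qEntropyVector, if_neg hI.ne_empty]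
  rw [reducedState_localDirectSum, reducedState_smul, reducedState_smul,
    vonNeumannEntropy_localDirectSum (hρI.smul (.all p)) (hσI.smul (.all (1 - p))),
    vonNeumannEntropy_smul hρI, vonNeumannEntropy_smul hσI, trace_reducedState,
    trace_reducedState, hρ_trace, hσ_trace, Real.binEntropy_eq_negMulLog_add_negMulLog_one_sub,
    Complex.one_re]
  ring

theorem smul_mem_closure_of_mem_quantumEntropyRegion {v : Finset (Fin n) → ℝ}
    (hv : v ∈ quantumEntropyRegion n) {t : ℝ} (ht : 0 ≤ t) :
    t • v ∈ closure (quantumEntropyRegion n) := by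
  have hp : Tendsto (fun m : ℕ => t / m) atTop (𝓝 0) := tendsto_const_div_atTop_nhds_zero_nat t
  let u : Finset (Fin n) → ℝ := fun I => if I = ∅ then 0 else 1
  have hlimit : Tendsto (fun m : ℕ => t • v + (Real.binEntropy (t / m) / Real.log 2) • u) atTop
      (𝓝 (t • v)) := by
    have hcont : Continuous fun p => t • v + (Real.binEntropy p / Real.log 2) • u := by fun_prop
    simpa [Function.comp_def] using (hcont.tendsto 0).comp hp
  refine mem_closure_of_tendsto hlimit ?_
  filter_upwards [hp.eventually_le_const one_pos, eventually_ne_atTop 0] with m hm₁ hm₀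
  have hmv : m • v ∈ quantumEntropyRegion n := (quantumEntropyAddSubmonoid n).nsmul_mem hv m
  have hscale : (t / m) • (m • v) = t • v := by
    rw [← Nat.cast_smul_eq_nsmul ℝ, smul_smul, div_mul_cancel₀ t (Nat.cast_ne_zero.mpr hm₀)]
  simpa only [hscale, smul_zero, add_zero] using mixture_mem_quantumEntropyRegion hmv
    zero_mem_quantumEntropyRegion (div_nonneg ht m.cast_nonneg) hm₁

theorem smul_mem_closure_quantumEntropyRegion {v : Finset (Fin n) → ℝ}
    (hv : v ∈ closure (quantumEntropyRegion n)) {t : ℝ} (ht : 0 ≤ t) :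
    t • v ∈ closure (quantumEntropyRegion n) := by
  have hmem := map_mem_closure (continuous_const_smul t) hv fun w hw =>
    smul_mem_closure_of_mem_quantumEntropyRegion hw ht
  rwa [closure_closure] at hmem

end EntropyRegion

/-- The closure of the quantum entropy region is a convex cone. -/
theorem closure_quantumEntropyRegion_is_convex_cone (n : ℕ) :
    Convex ℝ (closure (quantumEntropyRegion n)) ∧
      ∀ v ∈ closure (quantumEntropyRegion n), ∀ t : ℝ, 0 < t →
        t • v ∈ closure (quantumEntropyRegion n) := by
  refine ⟨fun v hv w hw a b ha hb _ => ?_, fun v hv t ht =>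
    smul_mem_closure_quantumEntropyRegion hv ht.le⟩
  exact (quantumEntropyAddSubmonoid n).topologicalClosure.add_mem
    (smul_mem_closure_quantumEntropyRegion hv ha) (smul_mem_closure_quantumEntropyRegion hw hb)
end

section
/- Let V be a real vector space, let K₁, K₂ ⊆ V be convex cones each containing 0, and let K = K₁ + K₂ = {a + b : a ∈ K₁, b ∈ K₂}. Assume: (i) Submodule.span ℝ K₁ ⊓ Submodule.span ℝ K₂ = ⊥, and (ii) K contains no line through the origin, i.e., for every v ≠ 0 it is not the case that t • v ∈ K for all t ∈ ℝ. Then the set of extremal rays of K equals the union of the set of extremal rays of K₁ and the set of extremal rays of K₂: ext(K) = ext(K₁) ∪ ext(K₂). -/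
open Pointwise

/-- The ray generated by a vector: `{t • v : t ≥ 0}`. -/
def coneRay {V : Type*} [AddCommGroup V] [Module ℝ V] (v : V) : Set V :=
  {w | ∃ t : ℝ, 0 ≤ t ∧ w = t • v}

/-- A ray `R` contained in a set `C` is an extremal ray of `C` if for every
`w ∈ R` and every decomposition `w = x + y` with `x, y ∈ C`, both `x, y ∈ R`. -/
def IsExtremalRay {V : Type*} [AddCommGroup V] [Module ℝ V] (C R : Set V) : Prop :=
  R ⊆ C ∧ (∃ v : V, R = coneRay v) ∧
    ∀ w ∈ R, ∀ x ∈ C, ∀ y ∈ C, w = x + y → x ∈ R ∧ y ∈ R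

/-- The set of extremal rays of `C`. -/
def extremalRays {V : Type*} [AddCommGroup V] [Module ℝ V] (C : Set V) :
    Set (Set V) :=
  {R | IsExtremalRay C R}

/-!
Since the spans of `K₁` and `K₂` meet only in `0` and neither cone contains a line, a sum of
elements of `K₁ + K₂` that lies in `Kᵢ` has its other components opposite to each other, hence zero:
each `Kᵢ` is a face of `K₁ + K₂`. The extremal rays of a face are the extremal rays of the whole set
that lie in it. Finally, split a generator of an extremal ray of `K₁ + K₂` as `a + b`. By
extremality `a` is on the ray, so either `a` also generates it, or the generator is `b` itself;
hence the ray lies in `K₁` or in `K₂`.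
-/

/-- `F` is a face of `C`: a subset such that whenever a sum of two elements of `C` lies in `F`, so
does each summand. This is `PointedCone.IsFaceOf` for arbitrary sets, used to transfer extremal rays
between a cone and its summands; by commutativity it is enough to ask for the first summand. -/
structure IsFace {V : Type*} [AddCommGroup V] (C F : Set V) : Prop where
  subset : F ⊆ C
  left_mem_of_add_mem : ∀ x ∈ C, ∀ y ∈ C, x + y ∈ F → x ∈ F

section Module

variable {𝕜 V : Type*} [Ring 𝕜] [AddCommGroup V] [Module 𝕜 V]

theorem eq_zero_of_neg_mem_of_forall_not_line [LinearOrder 𝕜] [IsStrictOrderedRing 𝕜] {K : Set V}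
    (hK : ∀ x ∈ K, ∀ t : 𝕜, 0 < t → t • x ∈ K) (hK0 : (0 : V) ∈ K)
    (hline : ∀ v : V, v ≠ 0 → ¬ ∀ t : 𝕜, t • v ∈ K) {x : V} (hx : x ∈ K) (hnx : -x ∈ K) :
    x = 0 := by
  by_contra hx0
  refine hline x hx0 fun t => ?_
  rcases lt_trichotomy t 0 with ht | rfl | ht
  · simpa only [neg_smul_neg] using hK (-x) hnx (-t) (neg_pos.2 ht)
  · simpa only [zero_smul] using hK0
  · exact hK x hx t ht

theorem isFace_add_left {K₁ K₂ : Set V} (hK₂0 : (0 : V) ∈ K₂)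
    (hdisj : Disjoint (Submodule.span 𝕜 K₁) (Submodule.span 𝕜 K₂))
    (hsalient : ∀ x ∈ K₂, -x ∈ K₂ → x = 0) : IsFace (K₁ + K₂) K₁ where
  subset := Set.subset_add_left K₁ hK₂0
  left_mem_of_add_mem := by
    rintro _ ⟨a, ha, b, hb, rfl⟩ _ ⟨c, hc, d, hd, rfl⟩ hmem
    have hbd_span₁ : b + d ∈ Submodule.span 𝕜 K₁ := by
      have hbd_eq : b + d = (a + b) + (c + d) - (a + c) := by abel
      rw [hbd_eq]
      exact sub_mem (Submodule.subset_span hmem)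
        (add_mem (Submodule.subset_span ha) (Submodule.subset_span hc))
    have hbd_span₂ : b + d ∈ Submodule.span 𝕜 K₂ :=
      add_mem (Submodule.subset_span hb) (Submodule.subset_span hd)
    have hbd : b + d = 0 := Submodule.disjoint_def.1 hdisj _ hbd_span₁ hbd_span₂
    have hb0 : b = 0 := hsalient b hb (neg_eq_of_add_eq_zero_right hbd ▸ hd)
    simpa only [hb0, add_zero] using ha

end Module

section ExtremalRay

variable {V : Type*} [AddCommGroup V] [Module ℝ V]

theorem mem_coneRay_self (v : V) : v ∈ coneRay v :=
  ⟨1, zero_le_one, (one_smul ℝ v).symm⟩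

theorem coneRay_subset {K : Set V} (hK : ∀ x ∈ K, ∀ t : ℝ, 0 < t → t • x ∈ K)
    (hK0 : (0 : V) ∈ K) {v : V} (hv : v ∈ K) : coneRay v ⊆ K := by
  rintro _ ⟨t, ht, rfl⟩
  rcases ht.eq_or_lt with rfl | ht
  · simpa only [zero_smul] using hK0
  · exact hK v hv t ht

theorem IsFace.isExtremalRay_iff {C F R : Set V} (hF : IsFace C F) :
    IsExtremalRay F R ↔ IsExtremalRay C R ∧ R ⊆ F := by
  constructor
  · rintro ⟨hRF, hray, hext⟩
    refine ⟨⟨hRF.trans hF.subset, hray, ?_⟩, hRF⟩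
    rintro _ hw x hx y hy rfl
    have hxF : x ∈ F := hF.left_mem_of_add_mem x hx y hy (hRF hw)
    have hyF : y ∈ F := hF.left_mem_of_add_mem y hy x hx (add_comm x y ▸ hRF hw)
    exact hext _ hw x hxF y hyF rfl
  · rintro ⟨⟨-, hray, hext⟩, hRF⟩
    exact ⟨hRF, hray, fun w hw x hx y hy => hext w hw x (hF.subset hx) y (hF.subset hy)⟩

theorem IsExtremalRay.subset_left_or_subset_right {K₁ K₂ R : Set V}
    (hK₁ : ∀ x ∈ K₁, ∀ t : ℝ, 0 < t → t • x ∈ K₁) (hK₁0 : (0 : V) ∈ K₁)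
    (hK₂ : ∀ x ∈ K₂, ∀ t : ℝ, 0 < t → t • x ∈ K₂) (hK₂0 : (0 : V) ∈ K₂)
    (hR : IsExtremalRay (K₁ + K₂) R) : R ⊆ K₁ ∨ R ⊆ K₂ := by
  obtain ⟨hRK, ⟨v, rfl⟩, hext⟩ := hR
  obtain ⟨a, ha, b, hb, hab⟩ := Set.mem_add.1 (hRK (mem_coneRay_self v))
  obtain ⟨s, hs, has⟩ : a ∈ coneRay v :=
    (hext v (mem_coneRay_self v) a (Set.subset_add_left K₁ hK₂0 ha)
      b (Set.subset_add_right K₂ hK₁0 hb) hab.symm).1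
  rcases hs.eq_or_lt with rfl | hs
  · have hbv : b = v := by simpa only [has, zero_smul, zero_add] using hab
    exact .inr (coneRay_subset hK₂ hK₂0 (hbv ▸ hb))
  · have hav : s⁻¹ • a = v := by rw [has, inv_smul_smul₀ hs.ne']
    exact .inl (coneRay_subset hK₁ hK₁0 (hav ▸ hK₁ a ha s⁻¹ (inv_pos.2 hs)))

end ExtremalRay

theorem extremalRays_of_direct_sum_of_cones_general
    {V : Type*} [AddCommGroup V] [Module ℝ V] (K₁ K₂ : Set V)
    (hK₁' : ∀ x ∈ K₁, ∀ t : ℝ, 0 < t → t • x ∈ K₁) (hK₁0 : (0 : V) ∈ K₁)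
    (hK₂' : ∀ x ∈ K₂, ∀ t : ℝ, 0 < t → t • x ∈ K₂) (hK₂0 : (0 : V) ∈ K₂)
    (hspan : Submodule.span ℝ K₁ ⊓ Submodule.span ℝ K₂ = ⊥)
    (hline : ∀ v : V, v ≠ 0 → ¬ (∀ t : ℝ, t • v ∈ K₁ + K₂)) :
    extremalRays (K₁ + K₂) = extremalRays K₁ ∪ extremalRays K₂ := by
  have hdisj : Disjoint (Submodule.span ℝ K₁) (Submodule.span ℝ K₂) := disjoint_iff.2 hspan
  have hsalient₁ : ∀ x ∈ K₁, -x ∈ K₁ → x = 0 := fun _ =>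
    eq_zero_of_neg_mem_of_forall_not_line hK₁' hK₁0 fun v hv hvline =>
      hline v hv fun t => Set.subset_add_left K₁ hK₂0 (hvline t)
  have hsalient₂ : ∀ x ∈ K₂, -x ∈ K₂ → x = 0 := fun _ =>
    eq_zero_of_neg_mem_of_forall_not_line hK₂' hK₂0 fun v hv hvline =>
      hline v hv fun t => Set.subset_add_right K₂ hK₁0 (hvline t)
  have hface₁ : IsFace (K₁ + K₂) K₁ := isFace_add_left hK₂0 hdisj hsalient₂
  have hface₂ : IsFace (K₁ + K₂) K₂ := add_comm K₂ K₁ ▸ isFace_add_left hK₁0 hdisj.symm hsalient₁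
  ext R
  calc IsExtremalRay (K₁ + K₂) R
    _ ↔ IsExtremalRay (K₁ + K₂) R ∧ (R ⊆ K₁ ∨ R ⊆ K₂) :=
      (and_iff_left_of_imp
        (IsExtremalRay.subset_left_or_subset_right hK₁' hK₁0 hK₂' hK₂0)).symm
    _ ↔ IsExtremalRay K₁ R ∨ IsExtremalRay K₂ R := by
      rw [hface₁.isExtremalRay_iff, hface₂.isExtremalRay_iff, and_or_left]

/-- If two convex cones containing `0` have trivially intersecting spans and
their Minkowski sum contains no line, then the extremal rays of the sum are
exactly the extremal rays of the summands. -/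
theorem extremalRays_of_direct_sum_of_cones
    {V : Type*} [AddCommGroup V] [Module ℝ V] (K₁ K₂ : Set V)
    (hK₁ : Convex ℝ K₁) (hK₁' : ∀ x ∈ K₁, ∀ t : ℝ, 0 < t → t • x ∈ K₁)
    (hK₁0 : (0 : V) ∈ K₁)
    (hK₂ : Convex ℝ K₂) (hK₂' : ∀ x ∈ K₂, ∀ t : ℝ, 0 < t → t • x ∈ K₂)
    (hK₂0 : (0 : V) ∈ K₂)
    (hspan : Submodule.span ℝ K₁ ⊓ Submodule.span ℝ K₂ = ⊥)
    (hline : ∀ v : V, v ≠ 0 → ¬ (∀ t : ℝ, t • v ∈ K₁ + K₂)) :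
    extremalRays (K₁ + K₂) = extremalRays K₁ ∪ extremalRays K₂ := by
  exact extremalRays_of_direct_sum_of_cones_general K₁ K₂ hK₁' hK₁0 hK₂' hK₂0 hspan hline
end

section
/- Let p be a pmf on a finite product ∏ i : Fin n, 𝒳 i of nonempty finite types with entropy vector v = h(p), and suppose the ray {t • v : t ≥ 0} is an isolated extremal ray of closure(Σ_n). Then at least one of the following holds: (1) v_I = 0 for some Finset I with ∅ ≠ I ⊊ Fin n (so v arises from lower-dimensional extremal rays via the direct-sum injection); (2) there exists r ≥ 0 with v_I = r for every nonempty I ⊆ Fin n; or (3) p and all its marginals are flat: for every nonempty I ⊆ Fin n there exists c > 0 such that every value of the marginal p_I is either 0 or c. -/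
/-- A point `w` of a set `C` lies in a polyhedral region of `C` if, near `w`,
`C` is cut out by finitely many linear inequalities. -/
def LiesInPolyhedralRegion {V : Type*} [AddCommGroup V] [Module ℝ V]
    [TopologicalSpace V] (C : Set V) (w : V) : Prop :=
  ∃ U : Set V, IsOpen U ∧ w ∈ U ∧ ∃ (m : ℕ) (f : Fin m → (V →ₗ[ℝ] ℝ)),
    C ∩ U = U ∩ {x | ∀ j, 0 ≤ f j x}

/-- An extremal ray is isolated if each of its nonzero points lies in a
polyhedral region of the cone. -/
def IsIsolatedExtremalRay {V : Type*} [AddCommGroup V] [Module ℝ V]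
    [TopologicalSpace V] (C R : Set V) : Prop :=
  IsExtremalRay C R ∧ ∀ w ∈ R, w ≠ 0 → LiesInPolyhedralRegion C w

open Filter Topology
open AffineMap (lineMap)

section ExtremalRays

lemma IsExtremalRay.exists_eq_smul_of_add_mem_of_sub_mem {V : Type*} [AddCommGroup V] [Module ℝ V]
    {C : Set V} {v w : V} (h : IsExtremalRay C (coneRay v)) {d : ℝ} (hd : d ≠ 0)
    (hadd : v + d • w ∈ C) (hsub : v - d • w ∈ C) : ∃ c : ℝ, w = c • v := by
  obtain ⟨⟨s, -, hs⟩, -⟩ := h.2.2 ((2 : ℝ) • v) ⟨2, zero_le_two, rfl⟩ _ hadd _ hsub (by module)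
  refine ⟨d⁻¹ * (s - 1), ?_⟩
  calc w = d⁻¹ • (v + d • w - v) := by simp [smul_smul, hd]
    _ = (d⁻¹ * (s - 1)) • v := by rw [hs]; module

variable {V : Type*} [NormedAddCommGroup V] [NormedSpace ℝ V] [FiniteDimensional ℝ V]
  {C : Set V} {γ : ℝ → V} {w : V} {t₀ : ℝ}

lemma hasDerivAt_eq_zero_of_eventually_nonneg {f : V →ₗ[ℝ] ℝ} (hγ : HasDerivAt γ w t₀)
    (hf : ∀ᶠ t in 𝓝 t₀, 0 ≤ f (γ t)) (h0 : f (γ t₀) = 0) : f w = 0 := by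
  have hmin : IsLocalMin (fun t => f (γ t)) t₀ := hf.mono fun t ht => h0.trans_le ht
  exact hmin.hasDerivAt_eq_zero (f.toContinuousLinearMap.hasFDerivAt.comp_hasDerivAt t₀ hγ)

lemma LiesInPolyhedralRegion.eventually_add_smul_mem (hC : LiesInPolyhedralRegion C (γ t₀))
    (hγ : HasDerivAt γ w t₀) (hγC : ∀ᶠ t in 𝓝 t₀, γ t ∈ C) :
    ∀ᶠ d in 𝓝 (0 : ℝ), γ t₀ + d • w ∈ C := by
  obtain ⟨U, hU, hvU, m, f, hCU⟩ := hC
  have hnonneg : ∀ᶠ t in 𝓝 t₀, ∀ j, 0 ≤ f j (γ t) := by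
    filter_upwards [hγC, hγ.continuousAt (hU.mem_nhds hvU)] with t htC htU
    exact (hCU.subset ⟨htC, htU⟩).2
  have hline : ContinuousAt (fun d : ℝ => γ t₀ + d • w) 0 := by fun_prop
  have hline_nonneg : ∀ᶠ d in 𝓝 (0 : ℝ), ∀ j, 0 ≤ f j (γ t₀ + d • w) := by
    refine eventually_all.2 fun j => ?_
    rcases (hnonneg.self_of_nhds j).eq_or_lt with hj | hj
    · have hw := hasDerivAt_eq_zero_of_eventually_nonneg hγ (hnonneg.mono fun t ht => ht j) hj.symm
      exact .of_forall fun d => by simp [hw, ← hj]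
    · have hf : ContinuousAt (fun d : ℝ => f j (γ t₀ + d • w)) 0 :=
        (f j).continuous_of_finiteDimensional.continuousAt.comp hline
      exact (hf.eventually (lt_mem_nhds (by simpa using hj))).mono fun _ => le_of_lt
  filter_upwards [hline (hU.mem_nhds (by simpa using hvU)), hline_nonneg] with d hdU hd
  exact (hCU.superset ⟨hdU, hd⟩).1

lemma IsIsolatedExtremalRay.exists_hasDerivAt_eq_smul
    (hray : IsIsolatedExtremalRay C (coneRay (γ t₀))) (h0 : γ t₀ ≠ 0) (hγ : HasDerivAt γ w t₀)
    (hγC : ∀ᶠ t in 𝓝 t₀, γ t ∈ C) : ∃ c : ℝ, w = c • γ t₀ := by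
  have hadd := (hray.2 _ ⟨1, zero_le_one, (one_smul ℝ _).symm⟩ h0).eventually_add_smul_mem hγ hγC
  have hsub : ∀ᶠ d in 𝓝 (0 : ℝ), γ t₀ - d • w ∈ C := by
    have hneg : Tendsto Neg.neg (𝓝 (0 : ℝ)) (𝓝 0) := by simpa using tendsto_neg (0 : ℝ)
    simpa [sub_eq_add_neg] using hneg.eventually hadd
  obtain ⟨d, ⟨hd_add, hd_sub⟩, hd⟩ :=
    (((hadd.and hsub).filter_mono nhdsWithin_le_nhds).and
      (self_mem_nhdsWithin : {(0 : ℝ)}ᶜ ∈ 𝓝[≠] 0)).exists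
  exact hray.1.exists_eq_smul_of_add_mem_of_sub_mem hd hd_add hd_sub

end ExtremalRays

section Pushforward

variable {X Y : Type*} [Finite Y] {q : X → ℝ} {f : X → Y}

lemma exists_ne_zero_of_linearMap_apply_ne_zero [Finite X] {y : Y}
    (hy : FunOnFinite.linearMap ℝ ℝ f q y ≠ 0) : ∃ x, f x = y ∧ q x ≠ 0 := by
  classical
  have := Fintype.ofFinite X
  rw [FunOnFinite.linearMap_apply_apply] at hy
  simpa using Finset.exists_ne_zero_of_sum_ne_zero hy

lemma linearMap_apply_pos [Finite X] (hq : ∀ x, 0 ≤ q x) {x : X} (hx : q x ≠ 0) :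
    0 < FunOnFinite.linearMap ℝ ℝ f q (f x) := by
  classical
  have := Fintype.ofFinite X
  rw [FunOnFinite.linearMap_apply_apply]
  exact Finset.sum_pos' (fun x _ => hq x) ⟨x, by simp, (hq x).lt_of_ne' hx⟩

lemma linearMap_apply_of_injective [Finite X] (hf : f.Injective) (x : X) :
    FunOnFinite.linearMap ℝ ℝ f q (f x) = q x := by
  classical
  have := Fintype.ofFinite X
  rw [FunOnFinite.linearMap_apply_apply]
  exact Finset.sum_eq_single_of_mem x (by simp) fun y hy hyx =>
    absurd (hf (Finset.mem_filter.1 hy).2) hyx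

lemma linearMap_mem_stdSimplex [Fintype X] [Fintype Y] (hq : q ∈ stdSimplex ℝ X) (f : X → Y) :
    FunOnFinite.linearMap ℝ ℝ f q ∈ stdSimplex ℝ Y :=
  stdSimplex.image_linearMap f ⟨q, hq, rfl⟩

end Pushforward

section StdSimplex

variable {X : Type*} [Fintype X] {q : X → ℝ}

lemma exists_ne_zero_of_mem_stdSimplex (hq : q ∈ stdSimplex ℝ X) : ∃ x, q x ≠ 0 := by
  by_contra! h
  simpa [h] using hq.2

lemma eventually_lineMap_single_mem_stdSimplex [DecidableEq X] (hq : q ∈ stdSimplex ℝ X) {x : X}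
    (hx : q x ≠ 0) : ∀ᶠ t in 𝓝 (0 : ℝ), lineMap q (Pi.single x 1) t ∈ stdSimplex ℝ X := by
  have hcont : ContinuousAt (fun t : ℝ => (1 - t) * q x + t) 0 := by fun_prop
  have hpos : ∀ᶠ t in 𝓝 (0 : ℝ), 0 < (1 - t) * q x + t :=
    hcont.eventually (lt_mem_nhds (by simpa using (hq.1 x).lt_of_ne' hx))
  filter_upwards [hpos, Iio_mem_nhds zero_lt_one] with t ht ht1
  refine ⟨fun y => ?_, ?_⟩
  · rcases eq_or_ne y x with rfl | hy
    · simpa [AffineMap.lineMap_apply_module] using ht.le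
    · simpa [AffineMap.lineMap_apply_module, hy] using
        mul_nonneg (sub_nonneg.2 (le_of_lt ht1)) (hq.1 y)
  · simp [AffineMap.lineMap_apply_module, Finset.sum_add_distrib, ← Finset.mul_sum, hq.2]

end StdSimplex

section WeightEntropy

variable {X : Type*} [Fintype X] {q : X → ℝ}

/-- Base-2 Shannon entropy of a real weight vector on a finite type. Working with real vectors
rather than `PMF`s gives access to the linear structure needed for differentiation. -/
noncomputable def weightEntropy (q : X → ℝ) : ℝ :=
  -∑ x, q x * Real.logb 2 (q x)

lemma weightEntropy_eq_sum_negMulLog (q : X → ℝ) :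
    weightEntropy q = (∑ x, Real.negMulLog (q x)) / Real.log 2 := by
  simp [weightEntropy, Real.negMulLog, Real.logb, Finset.sum_div, mul_div_assoc, neg_div]

lemma continuous_weightEntropy : Continuous (weightEntropy : (X → ℝ) → ℝ) := by
  simp only [funext weightEntropy_eq_sum_negMulLog]
  fun_prop

lemma weightEntropy_nonneg (hq : q ∈ stdSimplex ℝ X) : 0 ≤ weightEntropy q := by
  rw [weightEntropy_eq_sum_negMulLog]
  have hterm (x : X) : 0 ≤ Real.negMulLog (q x) :=
    Real.negMulLog_nonneg (hq.1 x) (mem_Icc_of_mem_stdSimplex hq x).2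
  exact div_nonneg (Finset.sum_nonneg fun x _ => hterm x) (Real.log_nonneg one_le_two)

lemma weightEntropy_eq_of_flat (hq : ∑ x, q x = 1) {c : ℝ} (hflat : ∀ x, q x = 0 ∨ q x = c) :
    weightEntropy q = -Real.logb 2 c := by
  have hterm (x : X) : q x * Real.logb 2 (q x) = q x * Real.logb 2 c := by
    rcases hflat x with h | h <;> simp [h]
  simp only [weightEntropy, hterm, ← Finset.sum_mul, hq, one_mul]

lemma weightEntropy_linearMap_of_injective {Y : Type*} [Fintype Y] {f : X → Y} (hf : f.Injective) :
    weightEntropy (FunOnFinite.linearMap ℝ ℝ f q) = weightEntropy q := by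
  refine congrArg Neg.neg (Fintype.sum_of_injective f hf _ _ (fun y hy => ?_) fun x => ?_).symm
  · rw [mul_eq_zero_of_left]
    contrapose! hy
    obtain ⟨x, hxy, -⟩ := exists_ne_zero_of_linearMap_apply_ne_zero hy
    exact ⟨x, hxy⟩
  · rw [linearMap_apply_of_injective hf]

lemma exists_weightEntropy_eq {a : ℝ} (ha : 0 ≤ a) :
    ∃ (N : ℕ) (q : Fin (N + 1) → ℝ), q ∈ stdSimplex ℝ (Fin (N + 1)) ∧ weightEntropy q = a := by
  obtain ⟨N, hN⟩ := exists_nat_ge ((2 : ℝ) ^ a)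
  let uniform : stdSimplex ℝ (Fin (N + 1)) := stdSimplex.barycenter
  have hvertex : weightEntropy (Pi.single (0 : Fin (N + 1)) 1) = 0 := by
    rw [weightEntropy_eq_of_flat (c := 1) (by simp) fun x => ?_, Real.logb_one, neg_zero]
    exact or_iff_not_imp_right.2 fun hx => by simp_all [Pi.single_apply]
  have huniform : a ≤ weightEntropy uniform.1 := by
    rw [weightEntropy_eq_of_flat uniform.2.2 fun x => .inr (stdSimplex.barycenter_apply x),
      Real.logb_inv, neg_neg, Real.le_logb_iff_rpow_le one_lt_two (by positivity)]
    simpa using hN.trans (le_add_of_nonneg_right zero_le_one)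
  obtain ⟨q, hq, hqa⟩ := (convex_stdSimplex ℝ (Fin (N + 1))).isPreconnected.intermediate_value
    (single_mem_stdSimplex ℝ 0) uniform.2 continuous_weightEntropy.continuousOn
    ⟨hvertex.trans_le ha, huniform⟩
  exact ⟨N, q, hq, hqa⟩

lemma hasDerivAt_negMulLog_lineMap {a b : ℝ} (h : a = 0 → b = 0) :
    HasDerivAt (fun t : ℝ => Real.negMulLog (lineMap a b t)) ((b - a) * (-Real.log a - 1)) 0 := by
  rcases eq_or_ne a 0 with rfl | ha
  · simpa [h rfl] using hasDerivAt_const (0 : ℝ) (0 : ℝ)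
  · have hlog : HasDerivAt Real.negMulLog (-Real.log a - 1) (lineMap a b (0 : ℝ)) := by
      simpa using Real.hasDerivAt_negMulLog ha
    exact (hlog.comp 0 AffineMap.hasDerivAt_lineMap).congr_deriv (mul_comm _ _)

lemma hasDerivAt_weightEntropy_lineMap_single [DecidableEq X] (hq : ∑ x, q x = 1) {x : X}
    (hx : q x ≠ 0) : HasDerivAt (fun t : ℝ => weightEntropy (lineMap q (Pi.single x 1) t))
      (-Real.logb 2 (q x) - weightEntropy q) 0 := by
  have hterm (y : X) : HasDerivAt
      (fun t : ℝ => Real.negMulLog (lineMap q (Pi.single x 1) t y))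
      (((Pi.single x 1 : X → ℝ) y - q y) * (-Real.log (q y) - 1)) 0 := by
    simp only [AffineMap.pi_lineMap_apply]
    refine hasDerivAt_negMulLog_lineMap fun hy => Pi.single_eq_of_ne ?_ 1
    rintro rfl
    exact hx hy
  have hsum : ∑ y, ((Pi.single x 1 : X → ℝ) y - q y) * (-Real.log (q y) - 1) =
      -Real.log (q x) - ∑ y, Real.negMulLog (q y) := by
    simpa [sub_mul, mul_sub, Finset.sum_sub_distrib, Pi.single_apply, hq, Real.negMulLog] using
      sub_eq_neg_add (∑ y, q y * Real.log (q y)) (Real.log (q x))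
  simp only [weightEntropy_eq_sum_negMulLog]
  refine ((HasDerivAt.fun_sum fun y _ => hterm y).div_const (Real.log 2)).congr_deriv ?_
  rw [hsum, sub_div, neg_div, Real.logb]

end WeightEntropy

section ConditionOn

variable {X : Type*} [Fintype X] {q : X → ℝ} {s : Set X}

/-- The total weight of a set, i.e. its probability when the weights form a distribution. -/
noncomputable def weightOn (q : X → ℝ) (s : Set X) : ℝ :=
  ∑ x, s.indicator q x

/-- The conditional distribution of `q` given `s`; it is zero when `s` has weight zero. -/
noncomputable def conditionOn (q : X → ℝ) (s : Set X) : X → ℝ :=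
  (weightOn q s)⁻¹ • s.indicator q

lemma le_weightOn (hq : ∀ x, 0 ≤ q x) {x : X} (hx : x ∈ s) : q x ≤ weightOn q s := by
  calc q x = s.indicator q x := (Set.indicator_of_mem hx q).symm
    _ ≤ weightOn q s := Finset.single_le_sum
      (fun y _ => Set.indicator_nonneg (fun y _ => hq y) y) (Finset.mem_univ x)

lemma weightOn_lt_one (hq : q ∈ stdSimplex ℝ X) {x : X} (hx : q x ≠ 0) (hxs : x ∉ s) :
    weightOn q s < 1 := by
  rw [← hq.2]
  refine Finset.sum_lt_sum (fun y _ => Set.indicator_le_self' (fun y _ => hq.1 y) y)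
    ⟨x, Finset.mem_univ x, ?_⟩
  simpa [hxs] using (hq.1 x).lt_of_ne' hx

lemma conditionOn_mem_stdSimplex (hq : ∀ x, 0 ≤ q x) (hs : weightOn q s ≠ 0) :
    conditionOn q s ∈ stdSimplex ℝ X := by
  have hind (x : X) : 0 ≤ s.indicator q x := Set.indicator_nonneg (fun y _ => hq y) x
  refine ⟨fun x => mul_nonneg (inv_nonneg.2 (Finset.sum_nonneg fun x _ => hind x)) (hind x), ?_⟩
  simpa [conditionOn, weightOn, ← Finset.mul_sum] using inv_mul_cancel₀ hs

lemma linearMap_conditionOn_apply {Y : Type*} [Finite Y] {f : X → Y} {y : Y}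
    (hs : ∀ x, f x = y → q x ≠ 0 → x ∈ s) :
    FunOnFinite.linearMap ℝ ℝ f (conditionOn q s) y =
      (weightOn q s)⁻¹ * FunOnFinite.linearMap ℝ ℝ f q y := by
  classical
  have hind (x : X) (hx : f x = y) : s.indicator q x = q x :=
    Set.indicator_apply_eq_self.2 fun hxs => not_imp_comm.1 (hs x hx) hxs
  simp only [conditionOn, Pi.smul_apply, smul_eq_mul, FunOnFinite.linearMap_apply_apply]
  rw [Finset.mul_sum]
  exact Finset.sum_congr rfl fun x hx => by rw [hind x (Finset.mem_filter.1 hx).2]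

end ConditionOn

section Marginal

variable {ι : Type*} [Finite ι] {𝒳 : ι → Type*} [∀ i, Finite (𝒳 i)] {q : (∀ i, 𝒳 i) → ℝ}

/-- The marginal on the coordinates in `I`, as a linear map on joint weight vectors. -/
noncomputable def marginal (I : Finset ι) :
    ((∀ i, 𝒳 i) → ℝ) →ₗ[ℝ] ((∀ i : I, 𝒳 i) → ℝ) :=
  FunOnFinite.linearMap ℝ ℝ I.restrict

/-- The surprisals (pointwise information contents) at the outcome `x` of all marginals. The
convention `Real.logb 2 0 = 0` makes an entry `0` where the marginal weight vanishes. -/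
noncomputable def surprisalVector (q : (∀ i, 𝒳 i) → ℝ) (x : ∀ i, 𝒳 i) : Finset ι → ℝ :=
  fun I => -Real.logb 2 (marginal I q (I.restrict x))

lemma marginal_apply_pos (hq : ∀ x, 0 ≤ q x) {x : ∀ i, 𝒳 i} (hx : q x ≠ 0) (I : Finset ι) :
    0 < marginal I q (I.restrict x) :=
  linearMap_apply_pos hq hx

lemma surprisalVector_univ [Fintype ι] (q : (∀ i, 𝒳 i) → ℝ) (x : ∀ i, 𝒳 i) :
    surprisalVector q x Finset.univ = -Real.logb 2 (q x) := by
  have hinj : (Finset.univ.restrict : (∀ i, 𝒳 i) → _).Injective := fun x y h =>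
    funext fun i => congrFun h ⟨i, Finset.mem_univ i⟩
  rw [surprisalVector, marginal, linearMap_apply_of_injective hinj]

lemma marginal_eq_of_surprisalVector_eq (hq : ∀ x, 0 ≤ q x) {x y : ∀ i, 𝒳 i} (hx : q x ≠ 0)
    (hy : q y ≠ 0) {I : Finset ι} (h : surprisalVector q x I = surprisalVector q y I) :
    marginal I q (I.restrict x) = marginal I q (I.restrict y) :=
  Real.logb_injOn_pos one_lt_two (marginal_apply_pos hq hx I) (marginal_apply_pos hq hy I)
    (neg_injective h)

lemma marginal_flat_of_surprisalVector_eq (hq : ∀ x, 0 ≤ q x) {I : Finset ι} {x : ∀ i, 𝒳 i}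
    (hx : q x ≠ 0) (h : ∀ y, q y ≠ 0 → surprisalVector q y I = surprisalVector q x I)
    (z : ∀ i : I, 𝒳 i) : marginal I q z = 0 ∨ marginal I q z = marginal I q (I.restrict x) := by
  refine or_iff_not_imp_left.2 fun hz => ?_
  obtain ⟨y, rfl, hy⟩ := exists_ne_zero_of_linearMap_apply_ne_zero hz
  exact marginal_eq_of_surprisalVector_eq hq hy hx (h y hy)

end Marginal

section EntropyProfile

variable {ι : Type*} [Fintype ι] [DecidableEq ι] {𝒳 : ι → Type*} [∀ i, Fintype (𝒳 i)]
  {q : (∀ i, 𝒳 i) → ℝ}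

/-- The vector of all marginal entropies of a joint weight vector. -/
noncomputable def entropyProfile (q : (∀ i, 𝒳 i) → ℝ) : Finset ι → ℝ :=
  fun I => weightEntropy (marginal I q)

/-- The entropy vector of identical copies of one random variable of entropy `a`. -/
def constProfile (ι : Type*) [DecidableEq ι] (a : ℝ) : Finset ι → ℝ :=
  fun I => if I = ∅ then 0 else a

lemma marginal_mem_stdSimplex (hq : q ∈ stdSimplex ℝ (∀ i, 𝒳 i)) (I : Finset ι) :
    marginal I q ∈ stdSimplex ℝ (∀ i : I, 𝒳 i) :=
  linearMap_mem_stdSimplex hq I.restrict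

lemma entropyProfile_nonneg (hq : q ∈ stdSimplex ℝ (∀ i, 𝒳 i)) (I : Finset ι) :
    0 ≤ entropyProfile q I :=
  weightEntropy_nonneg (marginal_mem_stdSimplex hq I)

lemma entropyProfile_empty (hq : q ∈ stdSimplex ℝ (∀ i, 𝒳 i)) : entropyProfile q ∅ = 0 := by
  have hmarg := (marginal_mem_stdSimplex hq ∅).2
  rw [entropyProfile, weightEntropy_eq_of_flat (c := 1) hmarg fun y => .inr ?_, Real.logb_one,
    neg_zero]
  rwa [Fintype.sum_unique, Subsingleton.elim default y] at hmarg

lemma entropyProfile_linearMap_const {X : Type*} [Fintype X] {q : X → ℝ} (hq : q ∈ stdSimplex ℝ X) :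
    entropyProfile (FunOnFinite.linearMap ℝ ℝ (Function.const ι) q) =
      constProfile ι (weightEntropy q) := by
  funext I
  rcases I.eq_empty_or_nonempty with rfl | ⟨i, hi⟩
  · simpa [constProfile] using entropyProfile_empty (linearMap_mem_stdSimplex hq _)
  · have hinj : (I.restrict ∘ Function.const ι : X → I → X).Injective := fun x y h =>
      congrFun h ⟨i, hi⟩
    rw [constProfile, if_neg (Finset.ne_empty_of_mem hi), entropyProfile, marginal,
      ← LinearMap.comp_apply, ← FunOnFinite.linearMap_comp,
      weightEntropy_linearMap_of_injective hinj]

lemma hasDerivAt_entropyProfile_lineMap_single [DecidableEq (∀ i, 𝒳 i)]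
    (hq : q ∈ stdSimplex ℝ (∀ i, 𝒳 i)) {x : ∀ i, 𝒳 i} (hx : q x ≠ 0) :
    HasDerivAt (fun t : ℝ => entropyProfile (lineMap q (Pi.single x 1) t))
      (surprisalVector q x - entropyProfile q) 0 := by
  classical
  refine hasDerivAt_pi.2 fun I => ?_
  have hmarg (t : ℝ) : marginal I (lineMap q (Pi.single x 1) t) =
      lineMap (marginal I q) (Pi.single (I.restrict x) 1) t := by
    simp [AffineMap.lineMap_apply_module, marginal]
  simp only [entropyProfile, hmarg]
  exact hasDerivAt_weightEntropy_lineMap_single (marginal_mem_stdSimplex hq I).2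
    (marginal_apply_pos hq.1 hx I).ne'

/-- As `v I ≠ 0`, the marginal outcome determines the level of `m`, so conditioning on a level set
rescales the marginal there; the conditional marginal is flat. -/
lemma entropyProfile_conditionOn_level (hq : ∀ x, 0 ≤ q x) {m : (∀ i, 𝒳 i) → ℝ} {v : Finset ι → ℝ}
    (hm : ∀ x, q x ≠ 0 → surprisalVector q x = m x • v) {I : Finset ι} (hI : v I ≠ 0)
    {x : ∀ i, 𝒳 i} (hx : q x ≠ 0) :
    entropyProfile (conditionOn q {y | m y = m x}) I =
      m x * v I + Real.logb 2 (weightOn q {y | m y = m x}) := by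
  set s := {y | m y = m x}
  have hs : 0 < weightOn q s := ((hq x).lt_of_ne' hx).trans_le (le_weightOn (s := s) hq rfl)
  have hmI (y) (hy : q y ≠ 0) : surprisalVector q y I = m y * v I := congrFun (hm y hy) I
  have hlevel (y z) (hy : q y ≠ 0) (hz : q z ≠ 0) (hyz : I.restrict y = I.restrict z) :
      m y = m z := by
    refine mul_right_cancel₀ hI ?_
    rw [← hmI y hy, ← hmI z hz, surprisalVector, hyz, surprisalVector]
  have hflat (z : ∀ i : I, 𝒳 i) : marginal I (conditionOn q s) z = 0 ∨
      marginal I (conditionOn q s) z = (weightOn q s)⁻¹ * marginal I q (I.restrict x) := by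
    refine or_iff_not_imp_left.2 fun hz => ?_
    obtain ⟨y, rfl, hy⟩ := exists_ne_zero_of_linearMap_apply_ne_zero hz
    obtain ⟨hys, hqy⟩ : y ∈ s ∧ q y ≠ 0 := by
      simpa [conditionOn, hs.ne', Set.indicator_apply_eq_zero] using hy
    refine (linearMap_conditionOn_apply (s := s) fun z hzy hz =>
      (hlevel z y hz hqy hzy).trans hys).trans (congrArg _ ?_)
    refine marginal_eq_of_surprisalVector_eq hq hqy hx ?_
    rw [hmI y hqy, hmI x hx, hys]
  have hsum := (marginal_mem_stdSimplex (conditionOn_mem_stdSimplex hq hs.ne') I).2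
  rw [entropyProfile, weightEntropy_eq_of_flat hsum hflat, ← hmI x hx, surprisalVector,
    Real.logb_mul (inv_ne_zero hs.ne') (marginal_apply_pos hq hx I).ne', Real.logb_inv]
  ring

lemma smul_eq_entropyProfile_conditionOn_add_constProfile (hq : q ∈ stdSimplex ℝ (∀ i, 𝒳 i))
    {m : (∀ i, 𝒳 i) → ℝ} (hm : ∀ x, q x ≠ 0 → surprisalVector q x = m x • entropyProfile q)
    (hne : ∀ I, I ≠ ∅ → entropyProfile q I ≠ 0) {x : ∀ i, 𝒳 i} (hx : q x ≠ 0) :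
    m x • entropyProfile q = entropyProfile (conditionOn q {y | m y = m x}) +
      constProfile ι (-Real.logb 2 (weightOn q {y | m y = m x})) := by
  have hs : weightOn q {y | m y = m x} ≠ 0 :=
    (((hq.1 x).lt_of_ne' hx).trans_le (le_weightOn (s := {y | m y = m x}) hq.1 rfl)).ne'
  funext I
  simp only [Pi.smul_apply, Pi.add_apply, smul_eq_mul, constProfile]
  split_ifs with hI
  · rw [hI, entropyProfile_empty hq, entropyProfile_empty (conditionOn_mem_stdSimplex hq.1 hs)]
    simp
  · rw [entropyProfile_conditionOn_level hq.1 hm (hne I hI) hx]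
    ring

lemma entropyProfile_univ_pos_and_pos_of_lt_one (hq : q ∈ stdSimplex ℝ (∀ i, 𝒳 i)) {x : ∀ i, 𝒳 i}
    {c : ℝ} (hx : q x ≠ 0) (hx1 : q x < 1) (hc : surprisalVector q x = c • entropyProfile q) :
    0 < entropyProfile q Finset.univ ∧ 0 < c := by
  have hpos : 0 < c * entropyProfile q Finset.univ := by
    calc 0 < -Real.logb 2 (q x) :=
          neg_pos.2 (Real.logb_neg one_lt_two ((hq.1 x).lt_of_ne' hx) hx1)
      _ = c * entropyProfile q Finset.univ := by
          rw [← surprisalVector_univ, hc, Pi.smul_apply, smul_eq_mul]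
  have hc_pos := pos_of_mul_pos_left hpos (entropyProfile_nonneg hq _)
  exact ⟨pos_of_mul_pos_right hpos hc_pos.le, hc_pos⟩

end EntropyProfile

section PMF

lemma toReal_mem_stdSimplex {X : Type*} [Fintype X] (p : PMF X) :
    (fun x => (p x).toReal) ∈ stdSimplex ℝ X := by
  refine ⟨fun x => ENNReal.toReal_nonneg, ?_⟩
  rw [← ENNReal.toReal_sum fun x _ => p.apply_ne_top x, ← tsum_fintype (L := .unconditional _),
    p.tsum_coe, ENNReal.toReal_one]

lemma exists_pmf_toReal_eq {X : Type*} [Fintype X] {q : X → ℝ} (hq : q ∈ stdSimplex ℝ X) :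
    ∃ p : PMF X, (fun x => (p x).toReal) = q := by
  have hsum : ∑ x, ENNReal.ofReal (q x) = 1 := by
    rw [← ENNReal.ofReal_sum_of_nonneg fun x _ => hq.1 x, hq.2, ENNReal.ofReal_one]
  exact ⟨.ofFintype _ hsum, funext fun x => by simp [ENNReal.toReal_ofReal (hq.1 x)]⟩

lemma toReal_map_apply {X Y : Type*} [Finite X] [Finite Y] (p : PMF X) (f : X → Y) (y : Y) :
    (p.map f y).toReal = FunOnFinite.linearMap ℝ ℝ f (fun x => (p x).toReal) y := by
  classical
  have := Fintype.ofFinite X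
  rw [PMF.map_apply, tsum_fintype, ← Finset.sum_filter,
    ENNReal.toReal_sum fun x _ => p.apply_ne_top x, FunOnFinite.linearMap_apply_apply]
  simp only [eq_comm]

lemma toReal_map_restrict_apply {ι : Type*} [Finite ι] {𝒳 : ι → Type*} [∀ i, Finite (𝒳 i)]
    (p : PMF (∀ i, 𝒳 i)) (I : Finset ι) (y : ∀ i : I, 𝒳 i) :
    (p.map (fun x => fun i : I => x i.1) y).toReal = marginal I (fun x => (p x).toReal) y :=
  toReal_map_apply p I.restrict y

variable {n : ℕ} {𝒳 : Fin n → Type} [∀ i, Fintype (𝒳 i)]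

lemma entropyVector_eq_entropyProfile (p : PMF (∀ i, 𝒳 i)) :
    entropyVector p = entropyProfile fun x => (p x).toReal := by
  funext I
  simp only [entropyVector, shannonEntropy, tsum_fintype, toReal_map_restrict_apply,
    entropyProfile, weightEntropy]

variable [∀ i, Nonempty (𝒳 i)] {q : (∀ i, 𝒳 i) → ℝ}

lemma entropyProfile_mem_classicalEntropyRegion (hq : q ∈ stdSimplex ℝ (∀ i, 𝒳 i)) :
    entropyProfile q ∈ classicalEntropyRegion n := by
  obtain ⟨p, rfl⟩ := exists_pmf_toReal_eq hq
  exact ⟨𝒳, inferInstance, inferInstance, p, (entropyVector_eq_entropyProfile p).symm⟩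

lemma constProfile_mem_classicalEntropyRegion (n : ℕ) {a : ℝ} (ha : 0 ≤ a) :
    constProfile (Fin n) a ∈ classicalEntropyRegion n := by
  obtain ⟨N, q, hq, rfl⟩ := exists_weightEntropy_eq ha
  rw [← entropyProfile_linearMap_const hq]
  exact entropyProfile_mem_classicalEntropyRegion (linearMap_mem_stdSimplex hq _)

lemma exists_surprisalVector_eq_smul (hq : q ∈ stdSimplex ℝ (∀ i, 𝒳 i))
    (hray : IsIsolatedExtremalRay (closure (classicalEntropyRegion n)) (coneRay (entropyProfile q)))
    (h0 : entropyProfile q ≠ 0) {x : ∀ i, 𝒳 i} (hx : q x ≠ 0) :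
    ∃ c : ℝ, surprisalVector q x = c • entropyProfile q := by
  classical
  let γ : ℝ → Finset (Fin n) → ℝ := fun t => entropyProfile (lineMap q (Pi.single x 1) t)
  have hγ0 : γ 0 = entropyProfile q := by simp [γ]
  have hγ : ∀ᶠ t in 𝓝 0, γ t ∈ closure (classicalEntropyRegion n) :=
    (eventually_lineMap_single_mem_stdSimplex hq hx).mono fun t ht =>
      subset_closure (entropyProfile_mem_classicalEntropyRegion ht)
  rw [← hγ0] at hray h0
  obtain ⟨c, hc⟩ := hray.exists_hasDerivAt_eq_smul h0
    (hasDerivAt_entropyProfile_lineMap_single hq hx) hγ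
  exact ⟨c + 1, by rw [add_smul, one_smul, ← hγ0, ← hc, hγ0, sub_add_cancel]⟩

lemma exists_forall_entropyProfile_eq (hq : q ∈ stdSimplex ℝ (∀ i, 𝒳 i))
    (hext : IsExtremalRay (closure (classicalEntropyRegion n)) (coneRay (entropyProfile q)))
    {m : (∀ i, 𝒳 i) → ℝ} (hm : ∀ x, q x ≠ 0 → surprisalVector q x = m x • entropyProfile q)
    (hne : ∀ I, I ≠ ∅ → I ≠ Finset.univ → entropyProfile q I ≠ 0) {x y : ∀ i, 𝒳 i} (hx : q x ≠ 0)
    (hy : q y ≠ 0) (hxy : m x ≠ m y) :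
    ∃ r : ℝ, 0 ≤ r ∧ ∀ I, I ≠ ∅ → entropyProfile q I = r := by
  set P := weightOn q {z | m z = m x}
  have hxP : q x ≤ P := le_weightOn (s := {z | m z = m x}) hq.1 rfl
  have hP0 : 0 < P := ((hq.1 x).lt_of_ne' hx).trans_le hxP
  have hP1 : P < 1 := weightOn_lt_one hq hy hxy.symm
  have hD : 0 < -Real.logb 2 P := neg_pos.2 (Real.logb_neg one_lt_two hP0 hP1)
  obtain ⟨huniv, hmx⟩ :=
    entropyProfile_univ_pos_and_pos_of_lt_one hq hx (hxP.trans_lt hP1) (hm x hx)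
  have hne' (I) (hI : I ≠ ∅) : entropyProfile q I ≠ 0 := by
    rcases eq_or_ne I Finset.univ with rfl | hI'
    exacts [huniv.ne', hne I hI hI']
  obtain ⟨-, s, hs, hsv⟩ := hext.2.2 (m x • entropyProfile q) ⟨m x, hmx.le, rfl⟩ _
    (subset_closure (entropyProfile_mem_classicalEntropyRegion
      (conditionOn_mem_stdSimplex hq.1 hP0.ne'))) _
    (subset_closure (constProfile_mem_classicalEntropyRegion n hD.le))
    (smul_eq_entropyProfile_conditionOn_add_constProfile hq hm hne' hx)
  refine ⟨-Real.logb 2 P / s, div_nonneg hD.le hs, fun I hI => ?_⟩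
  have hDs : -Real.logb 2 P = s * entropyProfile q I := by
    simpa [constProfile, hI] using congrFun hsv I
  exact eq_div_of_mul_eq (left_ne_zero_of_mul (hDs ▸ hD.ne')) (by rw [hDs, mul_comm])

end PMF

/-- Distributions whose entropy vector generates an isolated extremal ray of the
closed classical entropy cone: either the vector comes from a lower-dimensional
direct sum (some nontrivial proper entropy vanishes), or it is constant on
nonempty subsets, or the distribution and all its marginals are flat. -/
theorem structure_of_distributions_on_isolated_extremal_rays
    (n : ℕ) (𝒳 : Fin n → Type) [∀ i, Fintype (𝒳 i)] [∀ i, Nonempty (𝒳 i)]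
    (p : PMF (∀ i, 𝒳 i))
    (v : Finset (Fin n) → ℝ) (hv : v = entropyVector p)
    (hray : IsIsolatedExtremalRay (closure (classicalEntropyRegion n)) (coneRay v)) :
    (∃ I : Finset (Fin n), I ≠ ∅ ∧ I ≠ Finset.univ ∧ v I = 0) ∨
    (∃ r : ℝ, 0 ≤ r ∧ ∀ I : Finset (Fin n), I ≠ ∅ → v I = r) ∨
    (∀ I : Finset (Fin n), I ≠ ∅ → ∃ c : ℝ, 0 < c ∧
        ∀ y : (∀ i : I, 𝒳 i.1),
          (p.map fun x => fun i : I => x i.1) y = 0 ∨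
          (p.map fun x => fun i : I => x i.1) y = ENNReal.ofReal c) := by
  set q : (∀ i, 𝒳 i) → ℝ := fun x => (p x).toReal
  have hq : q ∈ stdSimplex ℝ (∀ i, 𝒳 i) := toReal_mem_stdSimplex p
  rw [entropyVector_eq_entropyProfile] at hv
  subst hv
  rcases eq_or_ne (entropyProfile q) 0 with h0 | h0
  · exact .inr (.inl ⟨0, le_rfl, fun I _ => congrFun h0 I⟩)
  choose! m hm using fun x (hx : q x ≠ 0) => exists_surprisalVector_eq_smul hq hray h0 hx
  by_cases hconst : ∀ x y, q x ≠ 0 → q y ≠ 0 → m x = m y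
  · refine .inr (.inr fun I _ => ?_)
    obtain ⟨x, hx⟩ := exists_ne_zero_of_mem_stdSimplex hq
    refine ⟨marginal I q (I.restrict x), marginal_apply_pos hq.1 hx I, fun y => ?_⟩
    have hflat := marginal_flat_of_surprisalVector_eq hq.1 (I := I) hx
      (fun y hy => by rw [hm y hy, hm x hx, hconst y x hy hx]) y
    rw [← ENNReal.ofReal_toReal (PMF.apply_ne_top _ y), toReal_map_restrict_apply]
    exact hflat.imp (fun h => by rw [h, ENNReal.ofReal_zero]) (congrArg ENNReal.ofReal)
  by_cases hvanish : ∃ I : Finset (Fin n), I ≠ ∅ ∧ I ≠ Finset.univ ∧ entropyProfile q I = 0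
  · exact .inl hvanish
  push Not at hconst hvanish
  obtain ⟨x, y, hx, hy, hxy⟩ := hconst
  exact .inr (.inl (exists_forall_entropyProfile_eq hq hray.1 hm
    (fun I hI => hvanish I (Finset.nonempty_iff_ne_empty.2 hI)) hx hy hxy))
end

section
/- Fix integers d ≥ 1 and n ≥ 0 and let V = Fin n → (ZMod d × ZMod d) with standard symplectic form ω. For every ZMod d-submodule M ⊆ V, the symplectic complement M^ω = {v ∈ V : ω(v,m) = 0 for all m ∈ M} is a submodule and satisfies Nat.card M · Nat.card M^ω = Nat.card V = d^(2n); in particular (M^ω)^ω = M. -/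
/-- The standard symplectic form on the finite phase space
`V = Fin n → ZMod d × ZMod d`. -/
def symplForm (d n : ℕ) (v w : Fin n → ZMod d × ZMod d) : ZMod d :=
  ∑ i, ((v i).1 * (w i).2 - (v i).2 * (w i).1)

lemma symplForm_zero_left (d n : ℕ) (m : Fin n → ZMod d × ZMod d) :
    symplForm d n 0 m = 0 := by
  simp [symplForm]

lemma symplForm_add_left (d n : ℕ) (a b m : Fin n → ZMod d × ZMod d) :
    symplForm d n (a + b) m = symplForm d n a m + symplForm d n b m := by
  simp only [symplForm, ← Finset.sum_add_distrib]
  refine Finset.sum_congr rfl fun i _ => ?_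
  simp only [Pi.add_apply, Prod.fst_add, Prod.snd_add]
  ring

lemma symplForm_smul_left (d n : ℕ) (c : ZMod d) (a m : Fin n → ZMod d × ZMod d) :
    symplForm d n (c • a) m = c * symplForm d n a m := by
  simp only [symplForm, Finset.mul_sum]
  refine Finset.sum_congr rfl fun i _ => ?_
  simp only [Pi.smul_apply, Prod.smul_fst, Prod.smul_snd, smul_eq_mul]
  ring

/-- The symplectic complement `M^ω = {v : ω(v,m) = 0 for all m ∈ M}` of a
submodule of the finite phase space; it is again a submodule. -/
def symplComplement {d n : ℕ} (M : Submodule (ZMod d) (Fin n → ZMod d × ZMod d)) :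
    Submodule (ZMod d) (Fin n → ZMod d × ZMod d) where
  carrier := {v | ∀ m ∈ M, symplForm d n v m = 0}
  zero_mem' := fun m _ => symplForm_zero_left d n m
  add_mem' := by
    intro a b ha hb m hm
    rw [symplForm_add_left, ha m hm, hb m hm, add_zero]
  smul_mem' := by
    intro c a ha m hm
    rw [symplForm_smul_left, ha m hm, mul_zero]

/-!
Composing a bilinear form `B` with a primitive additive character `ψ` gives a pairing
`(v, w) ↦ ψ (B v w)` of finite additive groups. Summing a pairing of `G` with `H` over both
variables, in either order, gives `|H| · |left kernel| = |G| · |right kernel|` by orthogonality of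
characters. When `B` is restricted to `M × V`, the left kernel is trivial by nondegeneracy and the
right kernel is the orthogonal complement of `M`.
-/

section CharacterPairing

variable {G H K : Type*} [AddGroup G] [AddGroup H] [Finite G] [Finite H]
  [CommSemiring K] [IsDomain K] [CharZero K]

lemma card_mul_card_leftKer_eq_card_mul_card_rightKer (χ : G →+ AddChar H K) :
    Nat.card H * Nat.card {g // ∀ h, χ g h = 1} =
      Nat.card G * Nat.card {h // ∀ g, χ g h = 1} := by
  classical
  have := Fintype.ofFinite G
  have := Fintype.ofFinite H
  have sum_right (g : G) :
      ∑ h, χ g h = if ∀ h, χ g h = 1 then (Fintype.card H : K) else 0 := by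
    simpa only [AddChar.eq_zero_iff] using AddChar.sum_eq_ite (χ g)
  have sum_left (h : H) :
      ∑ g, χ g h = if ∀ g, χ g h = 1 then (Fintype.card G : K) else 0 := by
    simpa only [AddChar.eq_zero_iff] using!
      AddChar.sum_eq_ite ((AddChar.doubleDualEmb h).compAddMonoidHom χ)
  have double_count : ∑ g, ∑ h, χ g h = ∑ h, ∑ g, χ g h := Finset.sum_comm
  simp only [sum_right, sum_left, ← Finset.sum_filter, Finset.sum_const, nsmul_eq_mul,
    ← Fintype.card_subtype] at double_count
  simp only [Nat.card_eq_fintype_card, mul_comm (Fintype.card H), mul_comm (Fintype.card G)]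
  exact_mod_cast double_count

end CharacterPairing

section BilinearPairing

variable {R V W K : Type*} [CommRing R] [AddCommGroup V] [Module R V] [AddCommGroup W] [Module R W]

section CommMonoid

variable [CommMonoid K]

lemma forall_addChar_apply_eq_one_iff_eq_zero {ψ : AddChar R K} (hψ : ψ.IsPrimitive)
    {f : W →ₗ[R] R} : (∀ w, ψ (f w) = 1) ↔ f = 0 := by
  refine ⟨fun h ↦ LinearMap.ext fun w ↦ ?_, fun h w ↦ by simp [h]⟩
  -- A nonzero value `f w` would make `ψ` trivial on the whole ideal generated by `f w`.
  by_contra hw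
  refine hψ hw (DFunLike.ext _ _ fun r ↦ ?_)
  calc ψ (f w * r) = ψ (f (r • w)) := by rw [map_smul, smul_eq_mul, mul_comm]
    _ = 1 := h (r • w)

/-- The pairing `(v, w) ↦ ψ (B v w)` of additive groups obtained from a bilinear pairing `B` and an
additive character `ψ` of the scalars, encoded as a homomorphism into the characters of the
second factor. -/
def bilinAddChar (ψ : AddChar R K) (B : V →ₗ[R] W →ₗ[R] R) : V →+ AddChar W K where
  toFun v := ψ.compAddMonoidHom (B v).toAddMonoidHom
  map_zero' := by ext; simp
  map_add' v v' := by ext; simp [AddChar.map_add_eq_mul]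

lemma bilinAddChar_apply (ψ : AddChar R K) (B : V →ₗ[R] W →ₗ[R] R) (v : V) (w : W) :
    bilinAddChar ψ B v w = ψ (B v w) :=
  rfl

end CommMonoid

lemma ker_flip_domRestrict_eq_orthogonal (B : LinearMap.BilinForm R V) (M : Submodule R V) :
    (B.domRestrict M).flip.ker = B.orthogonal M := by
  ext v
  simp [LinearMap.ext_iff]

variable [Finite V] [CommSemiring K] [IsDomain K] [CharZero K] {ψ : AddChar R K}

lemma card_mul_card_ker_eq_card_mul_card_ker_flip [Finite W] (hψ : ψ.IsPrimitive)
    (B : V →ₗ[R] W →ₗ[R] R) :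
    Nat.card W * Nat.card B.ker = Nat.card V * Nat.card B.flip.ker := by
  have left_ker (v : V) : (∀ w, bilinAddChar ψ B v w = 1) ↔ v ∈ B.ker :=
    forall_addChar_apply_eq_one_iff_eq_zero hψ
  have right_ker (w : W) : (∀ v, bilinAddChar ψ B v w = 1) ↔ w ∈ B.flip.ker :=
    forall_addChar_apply_eq_one_iff_eq_zero hψ (f := B.flip w)
  simpa only [left_ker, right_ker] using
    card_mul_card_leftKer_eq_card_mul_card_rightKer (bilinAddChar ψ B)

lemma card_mul_card_orthogonal (hψ : ψ.IsPrimitive) {B : LinearMap.BilinForm R V}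
    (hB : B.SeparatingLeft) (M : Submodule R V) :
    Nat.card M * Nat.card (B.orthogonal M) = Nat.card V := by
  have hker : (B.domRestrict M).ker = ⊥ := by
    rw [LinearMap.ker_domRestrict, LinearMap.separatingLeft_iff_ker_eq_bot.mp hB,
      Submodule.comap_bot, Submodule.ker_subtype]
  calc Nat.card M * Nat.card (B.orthogonal M)
      = Nat.card V * Nat.card (B.domRestrict M).ker := by
        rw [← ker_flip_domRestrict_eq_orthogonal,
          ← card_mul_card_ker_eq_card_mul_card_ker_flip hψ (B.domRestrict M)]
    _ = Nat.card V := by rw [hker, Nat.card_unique (α := (⊥ : Submodule R M)), mul_one]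

theorem card_mul_card_symplComplement_general (hψ : ψ.IsPrimitive) {B : LinearMap.BilinForm R V}
    (hrefl : B.IsRefl) (hB : B.SeparatingLeft) (M : Submodule R V) :
    Nat.card M * Nat.card (B.orthogonal M) = Nat.card V ∧ B.orthogonal (B.orthogonal M) = M := by
  have card_mul (N : Submodule R V) := card_mul_card_orthogonal hψ hB N
  have card_eq : Nat.card (B.orthogonal (B.orthogonal M)) = Nat.card M := by
    refine Nat.eq_of_mul_eq_mul_left (Nat.card_pos (α := B.orthogonal M)) ?_
    rw [card_mul, mul_comm, card_mul]
  have le_double : M ≤ B.orthogonal (B.orthogonal M) :=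
    LinearMap.BilinForm.le_orthogonal_orthogonal hrefl
  exact ⟨card_mul M, (SetLike.coe_injective <|
    Set.eq_of_subset_of_ncard_le le_double card_eq.le (Set.toFinite _)).symm⟩

end BilinearPairing

section PhaseSpace

variable (d n : ℕ)

lemma neg_symplForm (v w : Fin n → ZMod d × ZMod d) :
    -symplForm d n v w = symplForm d n w v := by
  simp only [symplForm, ← Finset.sum_neg_distrib]
  exact Finset.sum_congr rfl fun i _ ↦ by ring

/-- The standard symplectic form `symplForm` as a bilinear form over `ZMod d`. -/
def symplBilinForm : LinearMap.BilinForm (ZMod d) (Fin n → ZMod d × ZMod d) :=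
  LinearMap.mk₂ (ZMod d) (symplForm d n) (symplForm_add_left d n) (symplForm_smul_left d n)
    (fun v w w' ↦ by simp only [← neg_symplForm d n _ v, symplForm_add_left, neg_add])
    (fun c v w ↦ by
      simp only [← neg_symplForm d n _ v, symplForm_smul_left, smul_eq_mul, mul_neg])

lemma symplBilinForm_apply (v w : Fin n → ZMod d × ZMod d) :
    symplBilinForm d n v w = symplForm d n v w :=
  rfl

lemma isRefl_symplBilinForm : (symplBilinForm d n).IsRefl := fun v w h ↦ by
  rw [symplBilinForm_apply] at h ⊢
  rw [← neg_symplForm, h, neg_zero]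

lemma symplForm_single_right (v : Fin n → ZMod d × ZMod d) (i : Fin n) (x : ZMod d × ZMod d) :
    symplForm d n v (Pi.single i x) = (v i).1 * x.2 - (v i).2 * x.1 := by
  rw [symplForm, Finset.sum_eq_single i (fun j _ hj ↦ by simp [hj]) (by simp), Pi.single_eq_same]

lemma separatingLeft_symplBilinForm : (symplBilinForm d n).SeparatingLeft := by
  intro v hv
  ext i
  · simpa [symplBilinForm_apply, symplForm_single_right] using hv (Pi.single i (0, 1))
  · simpa [symplBilinForm_apply, symplForm_single_right] using hv (Pi.single i (1, 0))

lemma card_phaseSpace : Nat.card (Fin n → ZMod d × ZMod d) = d ^ (2 * n) := by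
  rw [Nat.card_fun, Nat.card_prod, Nat.card_zmod, Nat.card_fin, pow_mul, sq]

variable {d n}

lemma symplComplement_eq_orthogonal (M : Submodule (ZMod d) (Fin n → ZMod d × ZMod d)) :
    symplComplement M = (symplBilinForm d n).orthogonal M :=
  Submodule.ext fun _ ↦ forall₂_congr fun _ _ ↦ (isRefl_symplBilinForm d n).eq_iff

end PhaseSpace

/-- `|M| · |M^ω| = |V| = d^(2n)`; in particular `(M^ω)^ω = M`. -/
theorem card_mul_card_symplComplement (d n : ℕ) (hd : 1 ≤ d)
    (M : Submodule (ZMod d) (Fin n → ZMod d × ZMod d)) :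
    Nat.card M * Nat.card (symplComplement M) =
        Nat.card (Fin n → ZMod d × ZMod d) ∧
    Nat.card (Fin n → ZMod d × ZMod d) = d ^ (2 * n) ∧
    symplComplement (symplComplement M) = M := by
  have : NeZero d := ⟨Nat.one_le_iff_ne_zero.mp hd⟩
  obtain ⟨card_mul, double_orthogonal⟩ :=
    card_mul_card_symplComplement_general (ZMod.isPrimitive_stdAddChar d)
      (isRefl_symplBilinForm d n) (separatingLeft_symplBilinForm d n) M
  simp only [symplComplement_eq_orthogonal]
  exact ⟨card_mul, card_phaseSpace d n, double_orthogonal⟩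
end

section
/- Let A be a nonempty finite type, n, m ∈ ℕ, and let x : Fin m → (Fin n → A) be a word of length m over the product alphabet A^n. For I : Finset (Fin n), let x_I : Fin m → (↥I → A) denote the marginal word, (x_I)(α)(i) = x(α)(i), and let T(x) be the type class of x, namely the finite set {x ∘ σ : σ a permutation of Fin m}. Then for every I : Finset (Fin n), the pushforward of the uniform probability distribution on T(x) under the marginalization map y ↦ y_I equals the uniform probability distribution on T(x_I). (In particular, for a composite random variable with rational distribution of denominator q, taking x of length qk realizes, for every k, a random variable all of whose marginals are uniformly distributed on the corresponding marginal type classes.) -/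
/-- The type class of a word `x` of length `m`: its orbit under the symmetric
group permuting the positions. -/
noncomputable def typeClass {B : Type*} {m : ℕ} (x : Fin m → B) : Finset (Fin m → B) :=
  letI := Classical.decEq B
  Finset.image (fun σ : Equiv.Perm (Fin m) => x ∘ σ) Finset.univ

lemma self_mem_typeClass {B : Type*} {m : ℕ} (x : Fin m → B) : x ∈ typeClass x := by
  classical
  refine Finset.mem_image.mpr ⟨1, Finset.mem_univ _, ?_⟩
  ext α
  simp

/-!
If `σ` is a uniformly random permutation, then `x ∘ σ` is uniform on the type class of `x`, since
right translation in the symmetric group permutes the nonempty fibres of `σ ↦ x ∘ σ` transitively.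
A map `g` applied letter by letter sends `x ∘ σ` to `(g ∘ x) ∘ σ`, which is thus uniform on the
type class of `g ∘ x`.
-/

lemma mem_typeClass_iff {B : Type*} {m : ℕ} {x y : Fin m → B} :
    y ∈ typeClass x ↔ ∃ σ : Equiv.Perm (Fin m), x ∘ σ = y := by
  simp [typeClass]

lemma eq_uniformOfFinset_of_forall_mem_eq {α : Type*} {p : PMF α} {s : Finset α} (hs : s.Nonempty)
    (hsupp : p.support ⊆ s) {c : ENNReal} (hc : ∀ a ∈ s, p a = c) :
    p = PMF.uniformOfFinset s hs := by
  have hp_zero : ∀ a ∉ s, p a = 0 := fun a ha =>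
    (p.apply_eq_zero_iff a).2 fun h => ha (hsupp h)
  have hc_card : c * s.card = 1 := by
    calc c * s.card = ∑ a ∈ s, p a := by
          rw [Finset.sum_congr rfl hc, Finset.sum_const, nsmul_eq_mul, mul_comm]
      _ = ∑' a, p a := (tsum_eq_sum hp_zero).symm
      _ = 1 := p.tsum_coe
  ext a
  by_cases ha : a ∈ s
  · rw [hc a ha, PMF.uniformOfFinset_apply_of_mem hs ha,
      ENNReal.eq_inv_of_mul_eq_one_left hc_card]
  · rw [hp_zero a ha, PMF.uniformOfFinset_apply_of_notMem hs ha]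

lemma map_comp_uniform_perm_apply_comp {ι B : Type*} [Fintype ι] [DecidableEq ι] (x y : ι → B)
    (τ : Equiv.Perm ι) :
    (PMF.uniformOfFintype (Equiv.Perm ι)).map (fun σ : Equiv.Perm ι => x ∘ σ) (y ∘ τ) =
      (PMF.uniformOfFintype (Equiv.Perm ι)).map (fun σ : Equiv.Perm ι => x ∘ σ) y := by
  classical
  have translate_fiber (σ : Equiv.Perm ι) : y ∘ τ = x ∘ ⇑(σ * τ) ↔ y = x ∘ σ := by
    rw [Equiv.Perm.coe_mul, ← Function.comp_assoc]
    exact τ.surjective.injective_comp_right.eq_iff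
  rw [PMF.map_apply, PMF.map_apply, ← (Equiv.mulRight τ).tsum_eq]
  simp only [Equiv.coe_mulRight, translate_fiber, PMF.uniformOfFintype_apply]

lemma map_comp_uniform_perm_eq_uniform_typeClass {B : Type*} {m : ℕ} (x : Fin m → B) :
    (PMF.uniformOfFintype (Equiv.Perm (Fin m))).map (fun σ : Equiv.Perm (Fin m) => x ∘ σ) =
      PMF.uniformOfFinset (typeClass x) ⟨x, self_mem_typeClass x⟩ := by
  set p := (PMF.uniformOfFintype (Equiv.Perm (Fin m))).map (fun σ : Equiv.Perm (Fin m) => x ∘ σ)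
  have support_subset : p.support ⊆ typeClass x := by
    intro y hy
    obtain ⟨σ, -, hσ⟩ := (PMF.mem_support_map_iff _ _ _).1 hy
    exact mem_typeClass_iff.2 ⟨σ, hσ⟩
  have apply_eq : ∀ y ∈ typeClass x, p y = p x := by
    intro y hy
    obtain ⟨τ, rfl⟩ := mem_typeClass_iff.1 hy
    exact map_comp_uniform_perm_apply_comp x x τ
  exact eq_uniformOfFinset_of_forall_mem_eq _ support_subset apply_eq

theorem map_uniform_typeClass_eq_uniform_marginal_typeClass_general {B C : Type*} {m : ℕ}
    (g : B → C) (x : Fin m → B) :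
    (PMF.uniformOfFinset (typeClass x) ⟨x, self_mem_typeClass x⟩).map (fun y => g ∘ y) =
      PMF.uniformOfFinset (typeClass (g ∘ x)) ⟨_, self_mem_typeClass _⟩ := by
  rw [← map_comp_uniform_perm_eq_uniform_typeClass, PMF.map_comp,
    ← map_comp_uniform_perm_eq_uniform_typeClass]
  rfl

/-- Marginalizing a uniformly distributed type class yields the uniform
distribution on the marginal type class. -/
theorem map_uniform_typeClass_eq_uniform_marginal_typeClass
    (A : Type) [Fintype A] [Nonempty A] (n m : ℕ)
    (x : Fin m → (Fin n → A)) (I : Finset (Fin n)) :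
    PMF.map (fun y : Fin m → (Fin n → A) => fun α => fun i : I => y α i.1)
        (PMF.uniformOfFinset (typeClass x) ⟨x, self_mem_typeClass x⟩) =
      PMF.uniformOfFinset (typeClass (fun α => fun i : I => x α i.1))
        ⟨_, self_mem_typeClass _⟩ := by
  exact map_uniform_typeClass_eq_uniform_marginal_typeClass_general
    (fun (a : Fin n → A) (i : I) => a i) x
end

section
/- Let A be a nonempty finite type, f : A → ℕ a frequency vector with N = ∑_a f a > 0, and p(a) = f(a)/N the corresponding empirical probability distribution. Then the normalized base-2 logarithm of the type class size converges to the entropy: lim_{k→∞, k ∈ ℕ} (1/(k·N)) · log₂( Nat.multinomial Finset.univ (fun a => k · f a) ) = H(p), where H(p) = −∑_a p(a)·log₂ p(a) (with 0·log₂ 0 = 0) and Nat.multinomial Finset.univ g = (∑_a g a)! / ∏_a (g a)! is the number of strings of length ∑ g with frequency vector g. -/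
/-!
Writing `log m! = m log m - m + E m`, the linear terms cancel in the logarithm of a multinomial
coefficient, leaving `log (multinomial s g) = n H(g / n) + E n - ∑ i ∈ s, E (g i)` where
`n = ∑ i ∈ s, g i` and `H` is the entropy in nats. Since `E` is nonnegative and increasing, each
`E (g i)` lies between `0` and `E n`, so the total error is `O(E n)` however the `g i` grow.
Stirling's formula gives `E n = o(n)`, and `H(g / n)` converges because `x log x` is continuous,
including at `0`.
-/

open Asymptotics Filter Real
open scoped Nat Topology

/-- The error in the leading-order Stirling approximation `log m! ≈ m log m - m`. The convention
`Real.log 0 = 0` makes it vanish at `m = 0`. -/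
noncomputable def stirlingError (m : ℕ) : ℝ :=
  log (m ! : ℝ) - (m * log m - m)

lemma stirlingError_zero : stirlingError 0 = 0 := by
  simp [stirlingError]

lemma natCast_mul_log_succ_sub_log_le_one (m : ℕ) :
    (m : ℝ) * (log (m + 1 : ℕ) - log m) ≤ 1 := by
  rcases m.eq_zero_or_pos with rfl | hm
  · simp
  have hm' : (0 : ℝ) < m := by exact_mod_cast hm
  calc (m : ℝ) * (log (m + 1 : ℕ) - log m)
      = m * log ((m + 1 : ℕ) / m) := by rw [log_div (by positivity) hm'.ne']
    _ ≤ m * ((m + 1 : ℕ) / m - 1) := by gcongr; exact log_le_sub_one_of_pos (by positivity)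
    _ = 1 := by push_cast; field_simp; ring

lemma stirlingError_succ_sub (m : ℕ) :
    stirlingError (m + 1) - stirlingError m = 1 - m * (log (m + 1 : ℕ) - log m) := by
  rw [stirlingError, stirlingError, Nat.factorial_succ, Nat.cast_mul,
    log_mul (by positivity) (by positivity)]
  push_cast
  ring

lemma stirlingError_monotone : Monotone stirlingError :=
  monotone_nat_of_le_succ fun m ↦ by
    linarith [stirlingError_succ_sub m, natCast_mul_log_succ_sub_log_le_one m]

lemma stirlingError_nonneg (m : ℕ) : 0 ≤ stirlingError m :=
  stirlingError_zero.symm.le.trans (stirlingError_monotone m.zero_le)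

lemma stirlingError_eq_log_stirlingSeq_add {m : ℕ} (hm : m ≠ 0) :
    stirlingError m = log (Stirling.stirlingSeq m) + 1 / 2 * (log 2 + log m) := by
  have hm' : (m : ℝ) ≠ 0 := Nat.cast_ne_zero.mpr hm
  rw [Stirling.log_stirlingSeq_formula, stirlingError, log_mul two_ne_zero hm',
    log_div hm' (exp_ne_zero 1), log_exp]
  ring

lemma stirlingError_isLittleO_natCast :
    stirlingError =o[atTop] (fun m : ℕ ↦ (m : ℝ)) := by
  have const_isLittleO (c : ℝ) : (fun _ : ℕ ↦ c) =o[atTop] (fun m : ℕ ↦ (m : ℝ)) :=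
    (isLittleO_const_id_atTop c).comp_tendsto tendsto_natCast_atTop_atTop
  have log_isLittleO : (fun m : ℕ ↦ log m) =o[atTop] (fun m : ℕ ↦ (m : ℝ)) :=
    isLittleO_log_id_atTop.comp_tendsto tendsto_natCast_atTop_atTop
  have log_stirlingSeq_isLittleO :
      (fun m ↦ log (Stirling.stirlingSeq m)) =o[atTop] (fun m : ℕ ↦ (m : ℝ)) :=
    ((Stirling.tendsto_stirlingSeq_sqrt_pi.log (by positivity)).isBigO_one ℝ).trans_isLittleO
      (const_isLittleO 1)
  refine (log_stirlingSeq_isLittleO.add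
    (((const_isLittleO (log 2)).add log_isLittleO).const_mul_left (1 / 2))).congr' ?_ .rfl
  filter_upwards [eventually_ne_atTop 0] with m hm
  exact (stirlingError_eq_log_stirlingSeq_add hm).symm

lemma mul_negMulLog_div (x : ℝ) {y : ℝ} (hy : y ≠ 0) :
    y * negMulLog (x / y) = negMulLog x + x * log y := by
  have h := negMulLog_mul (x / y) y
  have hxy : x / y * negMulLog y = -(x * log y) := by
    rw [negMulLog]
    field_simp
  rw [div_mul_cancel₀ x hy, hxy] at h
  linarith

section Multinomial

variable {ι : Type*} (s : Finset ι)

lemma log_multinomial (g : ι → ℕ) :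
    log (Nat.multinomial s g) = log ((∑ i ∈ s, g i)! : ℝ) - ∑ i ∈ s, log ((g i)! : ℝ) := by
  have hmultinomial : (Nat.multinomial s g : ℝ) ≠ 0 := by
    exact_mod_cast (Nat.multinomial_pos s g).ne'
  rw [← Nat.multinomial_spec s g, Nat.cast_mul, Nat.cast_prod,
    log_mul (Finset.prod_ne_zero_iff.mpr fun i _ ↦ by positivity) hmultinomial,
    log_prod fun i _ ↦ by positivity]
  ring

lemma sum_mul_sum_negMulLog_div_sum (x : ι → ℝ) (hx : ∑ i ∈ s, x i ≠ 0) :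
    (∑ i ∈ s, x i) * ∑ i ∈ s, negMulLog (x i / ∑ j ∈ s, x j) =
      ∑ i ∈ s, negMulLog (x i) - negMulLog (∑ i ∈ s, x i) := by
  simp only [Finset.mul_sum, mul_negMulLog_div _ hx, Finset.sum_add_distrib, ← Finset.sum_mul]
  simp only [negMulLog]
  ring

lemma log_multinomial_sub_sum_mul_entropy {g : ι → ℕ} (hg : ∑ i ∈ s, g i ≠ 0) :
    log (Nat.multinomial s g) -
        (∑ i ∈ s, g i : ℕ) * ∑ i ∈ s, negMulLog (g i / (∑ j ∈ s, g j : ℕ)) =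
      stirlingError (∑ i ∈ s, g i) - ∑ i ∈ s, stirlingError (g i) := by
  have hg' : ∑ i ∈ s, (g i : ℝ) ≠ 0 := by exact_mod_cast hg
  rw [log_multinomial, Nat.cast_sum, sum_mul_sum_negMulLog_div_sum s _ hg']
  simp only [stirlingError, negMulLog, Nat.cast_sum, Finset.sum_sub_distrib, neg_mul,
    Finset.sum_neg_distrib]
  ring

lemma abs_log_multinomial_sub_sum_mul_entropy_le {g : ι → ℕ} (hg : ∑ i ∈ s, g i ≠ 0) :
    |log (Nat.multinomial s g) -
        (∑ i ∈ s, g i : ℕ) * ∑ i ∈ s, negMulLog (g i / (∑ j ∈ s, g j : ℕ))| ≤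
      (s.card + 1) * stirlingError (∑ i ∈ s, g i) := by
  have sum_error_nonneg : 0 ≤ ∑ i ∈ s, stirlingError (g i) :=
    Finset.sum_nonneg fun i _ ↦ stirlingError_nonneg (g i)
  have sum_error_le :
      ∑ i ∈ s, stirlingError (g i) ≤ s.card * stirlingError (∑ i ∈ s, g i) := by
    rw [← nsmul_eq_mul]
    exact Finset.sum_le_card_nsmul _ _ _ fun i hi ↦
      stirlingError_monotone (Finset.single_le_sum_of_canonicallyOrdered hi)
  have error_nonneg := stirlingError_nonneg (∑ i ∈ s, g i)
  rw [log_multinomial_sub_sum_mul_entropy s hg, abs_le]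
  constructor <;> linarith

variable {α : Type*} {l : Filter α} {g : α → ι → ℕ}

lemma log_multinomial_sub_sum_mul_entropy_isLittleO
    (hsum : Tendsto (fun k ↦ ∑ i ∈ s, g k i) l atTop) :
    (fun k ↦ log (Nat.multinomial s (g k)) -
        (∑ i ∈ s, g k i : ℕ) * ∑ i ∈ s, negMulLog (g k i / (∑ j ∈ s, g k j : ℕ))) =o[l]
      (fun k ↦ ((∑ i ∈ s, g k i : ℕ) : ℝ)) := by
  refine IsBigO.trans_isLittleO (.of_bound (s.card + 1) ?_)
    (stirlingError_isLittleO_natCast.comp_tendsto hsum)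
  filter_upwards [hsum.eventually_ne_atTop 0] with k hk
  rw [norm_eq_abs, Function.comp_apply, norm_of_nonneg (stirlingError_nonneg _)]
  exact abs_log_multinomial_sub_sum_mul_entropy_le s hk

lemma tendsto_log_multinomial_div_sum {p : ι → ℝ}
    (hsum : Tendsto (fun k ↦ ∑ i ∈ s, g k i) l atTop)
    (hp : ∀ i ∈ s, Tendsto (fun k ↦ (g k i : ℝ) / (∑ j ∈ s, g k j : ℕ)) l (𝓝 (p i))) :
    Tendsto (fun k ↦ log (Nat.multinomial s (g k)) / (∑ i ∈ s, g k i : ℕ)) l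
      (𝓝 (∑ i ∈ s, negMulLog (p i))) := by
  have entropy_tendsto := tendsto_finsetSum s fun i hi ↦
    (continuous_negMulLog.tendsto (p i)).comp (hp i hi)
  have error_tendsto :=
    (log_multinomial_sub_sum_mul_entropy_isLittleO s hsum).tendsto_div_nhds_zero
  have limit := error_tendsto.add entropy_tendsto
  rw [zero_add] at limit
  refine limit.congr' ?_
  filter_upwards [hsum.eventually_ne_atTop 0] with k hk
  have hk' : ((∑ i ∈ s, g k i : ℕ) : ℝ) ≠ 0 := Nat.cast_ne_zero.mpr hk
  simp only [Function.comp_apply, sub_div, mul_div_cancel_left₀ _ hk', sub_add_cancel]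

theorem tendsto_log_typeClassSize_entropy_general {p : ι → ℝ}
    (hsum : Tendsto (fun k ↦ ∑ i ∈ s, g k i) l atTop)
    (hp : ∀ i ∈ s, Tendsto (fun k ↦ (g k i : ℝ) / (∑ j ∈ s, g k j : ℕ)) l (𝓝 (p i))) :
    Tendsto (fun k ↦ 1 / ((∑ i ∈ s, g k i : ℕ) : ℝ) * logb 2 (Nat.multinomial s (g k))) l
      (𝓝 (-∑ i ∈ s, p i * logb 2 (p i))) := by
  have limit := (tendsto_log_multinomial_div_sum s hsum hp).div_const (log 2)
  have entropy_base_two :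
      (∑ i ∈ s, negMulLog (p i)) / log 2 = -∑ i ∈ s, p i * logb 2 (p i) := by
    simp only [negMulLog, logb, Finset.sum_div, ← Finset.sum_neg_distrib, neg_mul, neg_div,
      mul_div_assoc]
  rw [entropy_base_two] at limit
  refine limit.congr fun k ↦ ?_
  rw [logb]
  ring

variable (f : ι → ℕ)

lemma tendsto_sum_mul_atTop (hf : 0 < ∑ i ∈ s, f i) :
    Tendsto (fun k : ℕ ↦ ∑ i ∈ s, k * f i) atTop atTop := by
  simpa only [← Finset.mul_sum, id_eq] using tendsto_id.atTop_mul_const' hf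

lemma tendsto_mul_div_sum_mul (i : ι) :
    Tendsto (fun k : ℕ ↦ ((k * f i : ℕ) : ℝ) / (∑ j ∈ s, k * f j : ℕ)) atTop
      (𝓝 (f i / (∑ j ∈ s, f j : ℕ))) := by
  refine tendsto_const_nhds.congr' ?_
  filter_upwards [eventually_ne_atTop 0] with k hk
  rw [← Finset.mul_sum, Nat.cast_mul, Nat.cast_mul,
    mul_div_mul_left _ _ (Nat.cast_ne_zero.mpr hk)]

end Multinomial

/-- Asymptotics of type class sizes: the normalized base-2 logarithm of the
multinomial coefficient counting strings with frequency vector `k • f` tends to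
the Shannon entropy of the empirical distribution `p(a) = f a / N`. -/
theorem tendsto_log_typeClassSize_entropy
    (A : Type) [Fintype A] [Nonempty A] (f : A → ℕ) (hN : 0 < ∑ a, f a) :
    Filter.Tendsto
      (fun k : ℕ =>
        (1 / ((k : ℝ) * ((∑ a, f a : ℕ) : ℝ))) *
          Real.logb 2 ((Nat.multinomial Finset.univ (fun a => k * f a) : ℕ) : ℝ))
      Filter.atTop
      (nhds (-∑ a, ((f a : ℝ) / ((∑ b, f b : ℕ) : ℝ)) *
        Real.logb 2 ((f a : ℝ) / ((∑ b, f b : ℕ) : ℝ)))) := by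
  simpa only [← Finset.mul_sum, Nat.cast_mul] using tendsto_log_typeClassSize_entropy_general
    Finset.univ (tendsto_sum_mul_atTop _ f hN) fun a _ ↦ tendsto_mul_div_sum_mul _ f a
end
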